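/- For critical site percolation on the triangular lattice, the cylinder point-to-point first-passage time t_{0,n} does not satisfy a strong law: it is NOT the case that t_{0,n}/log n → √3/π almost surely; that is, P({ω : lim_{n→∞} t_{0,n}(ω)/log n = √3/π}) < 1. -/

import Mathlib

open MeasureTheory Filter Topology

noncomputable section

/-- The triangular lattice vertex `x + y·e^{iπ/3} ∈ ℂ` associated to `(x, y) ∈ ℤ × ℤ`. -/
def triVertex (p : ℤ × ℤ) : ℂ :=
  (p.1 : ℂ) + (p.2 : ℂ) * Complex.exp (((Real.pi / 3 : ℝ) : ℂ) * Complex.I)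

/-- Adjacency in the triangular lattice: Euclidean distance one. -/
def triAdj (u v : ℤ × ℤ) : Prop := dist (triVertex u) (triVertex v) = 1

/-- A percolation configuration: `true` = yellow (passage time 1), `false` = blue (0). -/
abbrev Config := (ℤ × ℤ) → Bool

/-- The passage time `t(v)` of a site. -/
def siteTime (ω : Config) (v : ℤ × ℤ) : ℕ := if ω v then 1 else 0

/-- The passage time `T(γ)` of a path: sum of the `t(v)` over its vertices. -/
def pathTime (ω : Config) (γ : List (ℤ × ℤ)) : ℕ := (γ.map (siteTime ω)).sum

/-- A path: a nonempty list of distinct vertices, consecutive ones adjacent. -/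
def IsPath (γ : List (ℤ × ℤ)) : Prop := γ ≠ [] ∧ γ.Nodup ∧ γ.Chain' triAdj

/-- The (closed) hexagon of a vertex: its Voronoi cell with respect to the lattice. -/
def hexCell (v : ℤ × ℤ) : Set ℂ :=
  {z | ∀ w : ℤ × ℤ, dist z (triVertex v) ≤ dist z (triVertex w)}

/-- `P` is the i.i.d. Bernoulli(1/2) site percolation measure: every finite cylinder
event has probability `2^{-#sites}`. -/
def IsBernoulliHalf (P : Measure Config) : Prop :=
  IsProbabilityMeasure P ∧
    ∀ (s : Finset (ℤ × ℤ)) (f : (ℤ × ℤ) → Bool),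
      P {ω : Config | ∀ v ∈ s, ω v = f v} = (1 / 2 : ENNReal) ^ s.card

/-- `t_{0,n}`: the cylinder point-to-point first-passage time, over paths from the
vertex `0` to the vertex `i√3·n` which, except for their endpoints, lie strictly
between the hyperplanes `H_0` and `H_n`. -/
def tCyl (ω : Config) (n : ℕ) : ℕ :=
  sInf {m | ∃ γ : List (ℤ × ℤ), IsPath γ ∧ γ.head? = some (0, 0) ∧
    (∃ u, γ.getLast? = some u ∧ triVertex u = (Real.sqrt 3 * n : ℝ) * Complex.I) ∧
    (∀ v ∈ (γ.drop 1).dropLast,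
      0 < (triVertex v).im ∧ (triVertex v).im < Real.sqrt 3 * n) ∧
    pathTime ω γ = m}

/-!
Suppose that `t_{0,n} / log n` converges almost surely to some `c > 0`, so that outside an event of
small probability `t_{0,n}` lies between `(c - δ) log n` and `(c + δ) log n` for all large `n`.

The upper bound makes long blue (passage time zero) paths only polynomially unlikely: a path of
cost `O(log r)` which reaches distance `r²` contains a blue piece of diameter `r`. Using the
symmetries of the lattice and the Harris inequality, this piece is turned into a blue crossing from
`0` to `i√3·r` (a *block*) of probability at least `r⁻¹³`. The lower bound, in turn, makes it
expensive to leave an endpoint: with high probability every path from `i√3·n` to distance `r¹⁵`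
pays `(c / 8) log r`.

A blue *hook* around `i√3·n` at the scale `R = r¹⁶`, glued from 35 blocks, lets a path avoid this
payment on its way to `i√3·(n + 8R)`. It has probability at least `R⁻⁴⁵⁵` and depends on the
configuration near `i√3·n` only. Hence among `R⁴⁵⁵` well separated values of `n`, all of them
polynomial in `r`, some hook occurs together with a cheap approach to it with probability at least
`1 / 8`. Since `log n` is at most a constant times `log r`, the saving exceeds `2 δ log n` for
small `δ`, against the lower bound for `t_{0,n+8R}`.
-/

/-! ### The triangular lattice as a graph -/

/-- The triangular lattice as a graph, in the coordinates `(x, y) ↦ x + y·e^{iπ/3}`. -/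
def triGraph : SimpleGraph (ℤ × ℤ) where
  Adj u v := (v.1 = u.1 + 1 ∧ v.2 = u.2) ∨ (v.1 = u.1 - 1 ∧ v.2 = u.2) ∨
    (v.1 = u.1 ∧ v.2 = u.2 + 1) ∨ (v.1 = u.1 ∧ v.2 = u.2 - 1) ∨
    (v.1 = u.1 + 1 ∧ v.2 = u.2 - 1) ∨ (v.1 = u.1 - 1 ∧ v.2 = u.2 + 1)
  symm := ⟨fun u v h => by omega⟩
  loopless := ⟨fun u h => by omega⟩

theorem triGraph_adj {u v : ℤ × ℤ} : triGraph.Adj u v ↔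
    (v.1 = u.1 + 1 ∧ v.2 = u.2) ∨ (v.1 = u.1 - 1 ∧ v.2 = u.2) ∨
    (v.1 = u.1 ∧ v.2 = u.2 + 1) ∨ (v.1 = u.1 ∧ v.2 = u.2 - 1) ∨
    (v.1 = u.1 + 1 ∧ v.2 = u.2 - 1) ∨ (v.1 = u.1 - 1 ∧ v.2 = u.2 + 1) := Iff.rfl

theorem triVertex_re (u : ℤ × ℤ) : (triVertex u).re = u.1 + u.2 / 2 := by
  simp only [triVertex, Complex.add_re, Complex.intCast_re, Complex.mul_re,
    Complex.exp_ofReal_mul_I_re, Complex.intCast_im, Real.cos_pi_div_three]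
  ring

theorem triVertex_im (u : ℤ × ℤ) : (triVertex u).im = u.2 * (√3 / 2) := by
  simp only [triVertex, Complex.add_im, Complex.intCast_re, Complex.mul_im,
    Complex.exp_ofReal_mul_I_im, Complex.intCast_im, Real.sin_pi_div_three]
  ring

theorem dist_triVertex_sq (u v : ℤ × ℤ) : dist (triVertex u) (triVertex v) ^ 2 =
    (((v.1 - u.1) ^ 2 + (v.1 - u.1) * (v.2 - u.2) + (v.2 - u.2) ^ 2 : ℤ) : ℝ) := by
  have sqrt_three_sq : (√3 : ℝ) ^ 2 = 3 := Real.sq_sqrt (by norm_num)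
  rw [Complex.dist_eq, Complex.sq_norm, Complex.normSq_apply, Complex.sub_re, Complex.sub_im,
    triVertex_re, triVertex_re, triVertex_im, triVertex_im]
  push_cast
  linear_combination (((u.2 : ℝ) - v.2) ^ 2 / 4) * sqrt_three_sq

theorem eisenstein_norm_eq_one_iff {x y : ℤ} : x ^ 2 + x * y + y ^ 2 = 1 ↔
    (x = 1 ∧ y = 0) ∨ (x = -1 ∧ y = 0) ∨ (x = 0 ∧ y = 1) ∨ (x = 0 ∧ y = -1) ∨
      (x = 1 ∧ y = -1) ∨ (x = -1 ∧ y = 1) := by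
  constructor
  · intro h
    have hx : |x| ≤ 1 := abs_le_of_sq_le_sq (by nlinarith [sq_nonneg (x + 2 * y)]) zero_le_one
    have hy : |y| ≤ 1 := abs_le_of_sq_le_sq (by nlinarith [sq_nonneg (2 * x + y)]) zero_le_one
    obtain ⟨hx₀, hx₁⟩ := abs_le.1 hx
    obtain ⟨hy₀, hy₁⟩ := abs_le.1 hy
    interval_cases x <;> interval_cases y <;> simp_all
  · rintro (⟨rfl, rfl⟩ | ⟨rfl, rfl⟩ | ⟨rfl, rfl⟩ | ⟨rfl, rfl⟩ | ⟨rfl, rfl⟩ | ⟨rfl, rfl⟩) <;>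
      norm_num

theorem triAdj_iff_adj {u v : ℤ × ℤ} : triAdj u v ↔ triGraph.Adj u v := by
  have norm_form : triAdj u v ↔
      (v.1 - u.1) ^ 2 + (v.1 - u.1) * (v.2 - u.2) + (v.2 - u.2) ^ 2 = 1 := by
    rw [triAdj, ← sq_eq_sq₀ dist_nonneg zero_le_one, dist_triVertex_sq]
    norm_cast
  rw [norm_form, eisenstein_norm_eq_one_iff, triGraph_adj]
  omega

theorem exists_ray {d : ℤ × ℤ} (hd : triGraph.Adj 0 d) (p : ℤ × ℤ) (m : ℕ) :
    ∃ w : triGraph.Walk p (p + m • d), ∀ z ∈ w.support, ∃ i ≤ m, z = p + i • d := by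
  induction m with
  | zero => exact ⟨SimpleGraph.Walk.nil.copy rfl (by simp), by simp⟩
  | succ m ih =>
    obtain ⟨w, hw⟩ := ih
    have step : triGraph.Adj (p + m • d) (p + (m + 1) • d) := by
      rw [succ_nsmul, ← add_assoc]
      simp only [triGraph_adj, Prod.fst_add, Prod.snd_add, Prod.fst_zero, Prod.snd_zero] at hd ⊢
      omega
    refine ⟨w.concat step, fun z hz => ?_⟩
    rw [SimpleGraph.Walk.support_concat, List.mem_append, List.mem_singleton] at hz
    rcases hz with hz | rfl
    · obtain ⟨i, hi, rfl⟩ := hw z hz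
      exact ⟨i, by omega, rfl⟩
    · exact ⟨m + 1, le_rfl, rfl⟩

/-! ### Passage times of walks -/

theorem siteTime_le_one (ω : Config) (v : ℤ × ℤ) : siteTime ω v ≤ 1 := by
  unfold siteTime; split <;> simp

theorem pathTime_cons (ω : Config) (v : ℤ × ℤ) (l : List (ℤ × ℤ)) :
    pathTime ω (v :: l) = siteTime ω v + pathTime ω l := by
  simp [pathTime]

theorem pathTime_append (ω : Config) (l l' : List (ℤ × ℤ)) :
    pathTime ω (l ++ l') = pathTime ω l + pathTime ω l' := by
  simp [pathTime]

theorem pathTime_le_of_sublist (ω : Config) {l l' : List (ℤ × ℤ)} (h : l.Sublist l') :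
    pathTime ω l ≤ pathTime ω l' :=
  (h.map _).sum_le_sum (fun _ _ => Nat.zero_le _)

theorem siteTime_le_pathTime (ω : Config) {v : ℤ × ℤ} {l : List (ℤ × ℤ)} (h : v ∈ l) :
    siteTime ω v ≤ pathTime ω l :=
  List.single_le_sum (by simp) _ (List.mem_map_of_mem h)

theorem pathTime_support_append (ω : Config) {u v x : ℤ × ℤ} (p : triGraph.Walk u v)
    (q : triGraph.Walk v x) :
    pathTime ω (p.append q).support + siteTime ω v =
      pathTime ω p.support + pathTime ω q.support := by
  rw [SimpleGraph.Walk.support_append, pathTime_append, ← q.cons_tail_support, pathTime_cons,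
    List.tail_cons]
  ring

theorem mem_support_concat {V : Type*} {G : SimpleGraph V} {u v z y : V} (w : G.Walk u v)
    (h : G.Adj v z) : y ∈ (w.concat h).support ↔ y ∈ w.support ∨ y = z := by
  rw [SimpleGraph.Walk.support_concat, List.mem_append, List.mem_singleton]

theorem exists_first_entrance {V : Type*} {G : SimpleGraph V} (Q : V → Prop) {u v : V}
    (w : G.Walk u v) (hu : ¬ Q u) (hv : Q v) :
    ∃ (a b : V) (p : G.Walk u a) (q : G.Walk b v), G.Adj a b ∧ Q b ∧
      (∀ y ∈ p.support, ¬ Q y) ∧ w.support = p.support ++ q.support := by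
  induction w with
  | nil => exact absurd hv hu
  | @cons u c v h w ih =>
    by_cases hc : Q c
    · exact ⟨u, c, .nil, w, h, hc, by simpa using hu, by simp⟩
    · obtain ⟨a, b, p, q, hab, hb, hp, hpq⟩ := ih hc hv
      exact ⟨a, b, .cons h p, q, hab, hb, by simpa [hu] using hp, by simp [hpq]⟩

/-- `u` and `v` are joined by a walk inside `R` of passage time at most `k`. -/
def Reach (ω : Config) (R : Set (ℤ × ℤ)) (k : ℕ) (u v : ℤ × ℤ) : Prop :=
  ∃ w : triGraph.Walk u v, (∀ z ∈ w.support, z ∈ R) ∧ pathTime ω w.support ≤ k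

namespace Reach

variable {ω : Config} {R R' : Set (ℤ × ℤ)} {k l : ℕ} {u v z : ℤ × ℤ}

theorem mono (h : Reach ω R k u v) (hR : R ⊆ R') (hk : k ≤ l) : Reach ω R' l u v := by
  obtain ⟨w, hwR, hwk⟩ := h
  exact ⟨w, fun z hz => hR (hwR z hz), hwk.trans hk⟩

theorem mono_set (h : Reach ω R k u v) (hR : R ⊆ R') : Reach ω R' k u v :=
  h.mono hR le_rfl

theorem mono_cost (h : Reach ω R k u v) (hk : k ≤ l) : Reach ω R l u v :=
  h.mono subset_rfl hk

theorem right_mem (h : Reach ω R k u v) : v ∈ R := by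
  obtain ⟨w, hwR, -⟩ := h
  exact hwR _ w.end_mem_support

theorem siteTime_left_le (h : Reach ω R k u v) : siteTime ω u ≤ k := by
  obtain ⟨w, -, hwk⟩ := h
  exact (siteTime_le_pathTime ω w.start_mem_support).trans hwk

theorem refl (hu : u ∈ R) (hk : siteTime ω u ≤ k) : Reach ω R k u u :=
  ⟨.nil, by simpa using hu, by simpa [pathTime] using hk⟩

theorem symm (h : Reach ω R k u v) : Reach ω R k v u := by
  obtain ⟨w, hwR, hwk⟩ := h
  refine ⟨w.reverse, by simpa using hwR, ?_⟩
  simpa [pathTime, List.map_reverse, List.sum_reverse] using hwk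

theorem trans (h : Reach ω R k u v) (h' : Reach ω R l v z) : Reach ω R (k + l) u z := by
  obtain ⟨w, hwR, hwk⟩ := h
  obtain ⟨w', hwR', hwk'⟩ := h'
  refine ⟨w.append w', fun y hy => ?_, ?_⟩
  · exact ((SimpleGraph.Walk.mem_support_append_iff _ _).1 hy).elim (hwR y) (hwR' y)
  · have := pathTime_support_append ω w w'
    omega

theorem cons (h : triGraph.Adj u v) (hu : u ∈ R) (h' : Reach ω R l v z) :
    Reach ω R (siteTime ω u + l) u z := by
  obtain ⟨w, hwR, hwk⟩ := h'
  refine ⟨.cons h w, by simpa [hu] using hwR, ?_⟩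
  rw [SimpleGraph.Walk.support_cons, pathTime_cons]
  omega

theorem concat (h' : Reach ω R l u v) (h : triGraph.Adj v z) (hz : z ∈ R) :
    Reach ω R (siteTime ω z + l) u z :=
  (h'.symm.cons h.symm hz).symm

theorem first_entrance (Q : ℤ × ℤ → Prop) (h : Reach ω R k u v) (hu : ¬ Q u) (hv : Q v) :
    ∃ (a b : ℤ × ℤ) (i j : ℕ), triGraph.Adj a b ∧ Q b ∧ i + j ≤ k ∧
      Reach ω {y ∈ R | ¬ Q y} i u a ∧ Reach ω R j b v := by
  obtain ⟨w, hwR, hwk⟩ := h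
  obtain ⟨a, b, p, q, hab, hb, hp, hpq⟩ := exists_first_entrance Q w hu hv
  rw [hpq, pathTime_append] at hwk
  simp only [hpq, List.mem_append] at hwR
  exact ⟨a, b, _, _, hab, hb, hwk, ⟨p, fun y hy => ⟨hwR y (.inl hy), hp y hy⟩, le_rfl⟩,
    ⟨q, fun y hy => hwR y (.inr hy), le_rfl⟩⟩

theorem map (F : triGraph →g triGraph) (h : Reach (ω ∘ F) R k u v) (hR : ∀ z ∈ R, F z ∈ R') :
    Reach ω R' k (F u) (F v) := by
  obtain ⟨w, hwR, hwk⟩ := h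
  refine ⟨w.map F, ?_, ?_⟩
  · rw [SimpleGraph.Walk.support_map, List.forall_mem_map]
    exact fun z hz => hR z (hwR z hz)
  · rw [SimpleGraph.Walk.support_map, pathTime, List.map_map]
    exact hwk

end Reach

/-! ### The cylinder passage time -/

/-- The vertex `i√3·n` in lattice coordinates. -/
def topVertex (n : ℕ) : ℤ × ℤ := (-(n : ℤ), 2 * n)

/-- The region allowed to the paths defining `t_{0,n}`: the open strip between `H_0` and `H_n`
(that is, between rows `0` and `2n`) together with the two endpoints. -/
def cyl (n : ℕ) : Set (ℤ × ℤ) := {v | v = (0, 0) ∨ v = topVertex n ∨ (0 < v.2 ∧ v.2 < 2 * n)}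

section CylinderTime

variable {ω : Config} {k n : ℕ} {z : ℤ × ℤ}

theorem mem_cyl : z ∈ cyl n ↔
    (z.1 = 0 ∧ z.2 = 0) ∨ (z.1 = -n ∧ z.2 = 2 * n) ∨ (0 < z.2 ∧ z.2 < 2 * n) := by
  simp only [cyl, topVertex, Set.mem_ofPred_eq, Prod.ext_iff]

theorem triVertex_eq_iff_eq_topVertex :
    triVertex z = (Real.sqrt 3 * n : ℝ) * Complex.I ↔ z = topVertex n := by
  have sqrt_three_ne : (√3 : ℝ) ≠ 0 := by positivity
  have im_eq : (z.2 : ℝ) * (√3 / 2) = √3 * n ↔ (z.2 : ℝ) = 2 * n :=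
    ⟨fun h => mul_left_cancel₀ sqrt_three_ne (by linarith), fun h => by rw [h]; ring⟩
  rw [Complex.ext_iff, triVertex_re, triVertex_im, Complex.re_ofReal_mul, Complex.im_ofReal_mul,
    Complex.I_re, Complex.I_im, mul_zero, mul_one, im_eq, topVertex, Prod.ext_iff]
  constructor
  · rintro ⟨hre, him⟩
    exact ⟨by exact_mod_cast (by linarith : (z.1 : ℝ) = -n), by exact_mod_cast him⟩
  · rintro ⟨hfst, hsnd⟩
    rw [hfst, hsnd]
    push_cast
    exact ⟨by ring, rfl⟩

theorem triVertex_im_between_iff :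
    (0 < (triVertex z).im ∧ (triVertex z).im < Real.sqrt 3 * n) ↔ (0 < z.2 ∧ z.2 < 2 * n) := by
  have half_pos : (0 : ℝ) < √3 / 2 := by positivity
  rw [triVertex_im, show √3 * (n : ℝ) = (2 * n) * (√3 / 2) by ring,
    mul_pos_iff_of_pos_right half_pos, mul_lt_mul_iff_left₀ half_pos]
  norm_cast

theorem mem_dropLast_tail_support {V : Type*} {G : SimpleGraph V} {u v z : V} {w : G.Walk u v}
    (hz : z ∈ w.support) (hu : z ≠ u) (hv : z ≠ v) : z ∈ (w.support.drop 1).dropLast := by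
  rw [← w.cons_tail_support, List.mem_cons, or_iff_right hu] at hz
  rw [List.drop_one]
  refine List.mem_dropLast_of_mem_of_ne_getLast hz ?_
  rwa [List.getLast_tail, w.getLast_support]

theorem ne_of_mem_dropLast_tail_support {V : Type*} {G : SimpleGraph V} {u v z : V}
    {w : G.Walk u v} (hw : w.IsPath) (hz : z ∈ (w.support.drop 1).dropLast) :
    z ≠ u ∧ z ≠ v := by
  have hnd := hw.support_nodup
  rw [List.drop_one] at hz
  have hne : w.support.tail ≠ [] := List.ne_nil_of_mem (List.dropLast_subset _ hz)
  constructor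
  · rintro rfl
    rw [← w.cons_tail_support, List.nodup_cons] at hnd
    exact hnd.1 (List.dropLast_subset _ hz)
  · rintro rfl
    have hnd' := hnd.tail
    rw [← List.dropLast_append_getLast hne, List.nodup_append] at hnd'
    exact hnd'.2.2 z hz _ (List.mem_singleton_self _)
      (by rw [List.getLast_tail, w.getLast_support])

/-- The set whose infimum is `t_{0,n}`. -/
def cylTimes (ω : Config) (n : ℕ) : Set ℕ :=
  {m | ∃ γ : List (ℤ × ℤ), IsPath γ ∧ γ.head? = some (0, 0) ∧
    (∃ u, γ.getLast? = some u ∧ triVertex u = (Real.sqrt 3 * n : ℝ) * Complex.I) ∧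
    (∀ v ∈ (γ.drop 1).dropLast,
      0 < (triVertex v).im ∧ (triVertex v).im < Real.sqrt 3 * n) ∧
    pathTime ω γ = m}

theorem reach_of_mem_cylTimes (hk : k ∈ cylTimes ω n) :
    Reach ω (cyl n) k (0, 0) (topVertex n) := by
  obtain ⟨γ, ⟨hne, -, hchain⟩, hhead, ⟨u, hlast, hu⟩, hint, rfl⟩ := hk
  obtain rfl := triVertex_eq_iff_eq_topVertex.1 hu
  let w := SimpleGraph.Walk.ofSupport γ hne (hchain.imp fun _ _ => triAdj_iff_adj.1)
  have hstart : γ.head hne = (0, 0) := by simpa [List.head?_eq_some_head hne] using hhead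
  have hend : γ.getLast hne = topVertex n := by
    simpa [List.getLast?_eq_some_getLast hne] using hlast
  have hsupp : (w.copy hstart hend).support = γ := by
    rw [SimpleGraph.Walk.support_copy, SimpleGraph.Walk.support_ofSupport]
  refine ⟨w.copy hstart hend, fun z hz => ?_, by rw [hsupp]⟩
  by_cases hz₀ : z = (0, 0)
  · exact .inl hz₀
  by_cases hz₁ : z = topVertex n
  · exact .inr (.inl hz₁)
  have hz' := mem_dropLast_tail_support hz hz₀ hz₁
  rw [hsupp] at hz'
  exact .inr (.inr (triVertex_im_between_iff.1 (hint z hz')))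

theorem exists_mem_cylTimes_of_reach (h : Reach ω (cyl n) k (0, 0) (topVertex n)) :
    ∃ m ∈ cylTimes ω n, m ≤ k := by
  obtain ⟨w, hwR, hwk⟩ := h
  have hsub := w.support_bypass_sublist_support
  refine ⟨_, ⟨w.bypass.support, ⟨w.bypass.support_ne_nil, w.bypass_isPath.support_nodup,
      w.bypass.isChain_adj_support.imp fun _ _ => triAdj_iff_adj.2⟩, ?_, ⟨topVertex n, ?_,
      triVertex_eq_iff_eq_topVertex.2 rfl⟩, fun z hz => ?_, rfl⟩,
    (pathTime_le_of_sublist ω hsub).trans hwk⟩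
  · rw [List.head?_eq_some_head w.bypass.support_ne_nil, w.bypass.head_support]
  · rw [List.getLast?_eq_some_getLast w.bypass.support_ne_nil, w.bypass.getLast_support]
  · obtain ⟨hz₀, hz₁⟩ := ne_of_mem_dropLast_tail_support w.bypass_isPath hz
    have hzw : z ∈ w.support := hsub.subset (List.mem_of_mem_drop (List.mem_of_mem_dropLast hz))
    rw [triVertex_im_between_iff]
    exact ((hwR z hzw).resolve_left hz₀).resolve_left hz₁

theorem exists_reach_cyl (ω : Config) (hn : 1 ≤ n) :
    ∃ k, Reach ω (cyl n) k (0, 0) (topVertex n) := by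
  obtain ⟨up, hup⟩ := exists_ray (d := (0, 1)) (by simp [triGraph_adj]) (0, 0) (2 * n - 1)
  obtain ⟨left, hleft⟩ := exists_ray (d := (-1, 0)) (by simp [triGraph_adj])
    ((0, 0) + (2 * n - 1) • (0, 1)) n
  have reach_up : Reach ω (cyl n) _ _ _ := ⟨up, fun z hz => by
    obtain ⟨i, hi, rfl⟩ := hup z hz
    simp only [mem_cyl, Prod.smul_mk, Prod.mk_add_mk, nsmul_eq_mul]
    omega, le_rfl⟩
  have reach_left : Reach ω (cyl n) _ _ _ := ⟨left, fun z hz => by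
    obtain ⟨i, _, rfl⟩ := hleft z hz
    simp only [mem_cyl, Prod.smul_mk, Prod.mk_add_mk, nsmul_eq_mul]
    omega, le_rfl⟩
  refine ⟨_, (reach_up.trans reach_left).concat (z := topVertex n) ?_ (.inr (.inl rfl))⟩
  simp only [triGraph_adj, topVertex, Prod.smul_mk, Prod.mk_add_mk, nsmul_eq_mul]
  omega

theorem tCyl_le_iff (hn : 1 ≤ n) :
    tCyl ω n ≤ k ↔ Reach ω (cyl n) k (0, 0) (topVertex n) := by
  constructor
  · obtain ⟨l, hl⟩ := exists_reach_cyl ω hn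
    obtain ⟨m, hm, -⟩ := exists_mem_cylTimes_of_reach hl
    exact (reach_of_mem_cylTimes (Nat.sInf_mem ⟨m, hm⟩)).mono_cost
  · intro h
    obtain ⟨m, hm, hmk⟩ := exists_mem_cylTimes_of_reach h
    exact (Nat.sInf_le hm).trans hmk

end CylinderTime

/-! ### Crossing walks share a vertex -/

section Crossing

variable {u v p p' : ℤ × ℤ}

/-- The sum over the steps `(a, b)` of a walk of the weights `f a b`. -/
def walkSum {V : Type*} {G : SimpleGraph V} (f : V → V → ℤ) {u v : V} (w : G.Walk u v) : ℤ :=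
  (w.darts.map fun d => f d.fst d.snd).sum

theorem walkSum_eq_add_sub {V : Type*} {G : SimpleGraph V} {f g : V → V → ℤ} {S : V → ℤ} {u v : V}
    (w : G.Walk u v) (h : ∀ a ∈ w.support, ∀ b ∈ w.support, G.Adj a b →
      f a b = g a b + (S b - S a)) :
    walkSum f w = walkSum g w + (S v - S u) := by
  induction w with
  | nil => simp [walkSum]
  | @cons u c v hadj w ih =>
    have hstep := h u (by simp) c (by simp) hadj
    have htail := ih fun a ha b hb => h a (by simp [ha]) b (by simp [hb])
    simp only [walkSum, SimpleGraph.Walk.darts_cons, List.map_cons, List.sum_cons] at htail ⊢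
    linarith

/-- The signed number of crossings, by the step `(a, b)`, of the vertical half-line which starts
just to the right of `p` and goes up from the height of `p`. -/
def crossesAbove (p a b : ℤ × ℤ) : ℤ :=
  if a.1 = p.1 ∧ b.1 = p.1 + 1 ∧ p.2 < a.2 then 1
  else if b.1 = p.1 ∧ a.1 = p.1 + 1 ∧ p.2 < b.2 then -1 else 0

theorem fst_ne_or_snd_ne_of_mem {l : List (ℤ × ℤ)} (hp : p ∉ l) :
    ∀ a ∈ l, ¬ (a.1 = p.1 ∧ a.2 = p.2) :=
  fun _ ha h => hp (Prod.ext h.1 h.2 ▸ ha)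

/-- The two half-lines differ by the column above `p'`, which contains neither end of the walk. -/
theorem walkSum_crossesAbove_right (w : triGraph.Walk u v) (hp : p ∉ w.support)
    (hp' : p' ∉ w.support) (hadj : triGraph.Adj p p') (hright : p.1 < p'.1) (hu : u.1 < p'.1)
    (hv : p'.1 < v.1) :
    walkSum (crossesAbove p) w = walkSum (crossesAbove p') w := by
  have hne := fst_ne_or_snd_ne_of_mem hp
  have hne' := fst_ne_or_snd_ne_of_mem hp'
  rw [walkSum_eq_add_sub (g := crossesAbove p')
    (S := fun a => if a.1 = p'.1 ∧ p'.2 < a.2 then 1 else 0) w fun a ha b hb hab => ?_]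
  · rw [if_neg (by omega), if_neg (by omega), sub_zero, add_zero]
  · have := hne a ha
    have := hne b hb
    have := hne' a ha
    have := hne' b hb
    simp only [triGraph_adj] at hadj hab
    unfold crossesAbove
    omega

theorem walkSum_crossesAbove_same_column (w : triGraph.Walk u v) (hp : p ∉ w.support)
    (hp' : p' ∉ w.support) (hadj : triGraph.Adj p p') (hcol : p.1 = p'.1) :
    walkSum (crossesAbove p) w = walkSum (crossesAbove p') w := by
  have hne := fst_ne_or_snd_ne_of_mem hp
  have hne' := fst_ne_or_snd_ne_of_mem hp'
  rw [walkSum_eq_add_sub (g := crossesAbove p') (S := 0) w fun a ha b hb hab => ?_]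
  · simp
  · have := hne a ha
    have := hne b hb
    have := hne' a ha
    have := hne' b hb
    simp only [triGraph_adj] at hadj hab
    simp only [crossesAbove, Pi.zero_apply]
    omega

theorem walkSum_crossesAbove_adj (w : triGraph.Walk u v) (hp : p ∉ w.support)
    (hp' : p' ∉ w.support) (hadj : triGraph.Adj p p') (hcol : u.1 < p.1 ∧ p.1 < v.1)
    (hcol' : u.1 < p'.1 ∧ p'.1 < v.1) :
    walkSum (crossesAbove p) w = walkSum (crossesAbove p') w := by
  rcases lt_trichotomy p.1 p'.1 with h | h | h
  · exact walkSum_crossesAbove_right w hp hp' hadj h hcol'.1 hcol'.2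
  · exact walkSum_crossesAbove_same_column w hp hp' hadj h
  · exact (walkSum_crossesAbove_right w hp' hp hadj.symm h hcol.1 hcol.2).symm

theorem walkSum_crossesAbove_of_disjoint (w : triGraph.Walk u v) (c : triGraph.Walk p p')
    (hdisj : ∀ z ∈ c.support, z ∉ w.support) (hcol : ∀ z ∈ c.support, u.1 < z.1 ∧ z.1 < v.1) :
    walkSum (crossesAbove p) w = walkSum (crossesAbove p') w := by
  induction c with
  | nil => rfl
  | @cons p q p' hadj c ih =>
    simp only [SimpleGraph.Walk.support_cons, List.mem_cons, forall_eq_or_imp] at hdisj hcol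
    rw [walkSum_crossesAbove_adj w hdisj.1 (hdisj.2 q c.start_mem_support) hadj hcol.1
      (hcol.2 q c.start_mem_support)]
    exact ih hdisj.2 hcol.2

theorem walkSum_crossesAbove_of_le_row (w : triGraph.Walk u v) (hp : p ∉ w.support)
    (hrow : ∀ z ∈ w.support, p.2 ≤ z.2) (hu : u.1 ≤ p.1) (hv : p.1 < v.1) :
    walkSum (crossesAbove p) w = 1 := by
  have hne := fst_ne_or_snd_ne_of_mem hp
  rw [walkSum_eq_add_sub (g := 0) (S := fun a => if p.1 < a.1 then 1 else 0) w
    fun a ha b hb hab => ?_]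
  · simp [walkSum, hu.not_gt, hv]
  · have := hne a ha
    have := hne b hb
    have := hrow a ha
    have := hrow b hb
    simp only [triGraph_adj] at hab
    simp only [crossesAbove, Pi.zero_apply]
    omega

theorem walkSum_crossesAbove_of_row_le (w : triGraph.Walk u v)
    (hrow : ∀ z ∈ w.support, z.2 ≤ p.2) : walkSum (crossesAbove p) w = 0 := by
  rw [walkSum_eq_add_sub (g := 0) (S := 0) w fun a ha b hb _ => ?_]
  · simp [walkSum]
  · have := hrow a ha
    have := hrow b hb
    simp only [crossesAbove, Pi.zero_apply]
    omega

theorem exists_mem_support_of_fst_between (w : triGraph.Walk u v) (c : triGraph.Walk p p')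
    (hrow : ∀ z ∈ w.support, p.2 ≤ z.2 ∧ z.2 ≤ p'.2)
    (hcol : ∀ z ∈ c.support, u.1 < z.1 ∧ z.1 < v.1) :
    ∃ z, z ∈ w.support ∧ z ∈ c.support := by
  by_contra! hdisj
  replace hdisj : ∀ z ∈ c.support, z ∉ w.support := fun z hzc hzw => hdisj z hzw hzc
  obtain ⟨hu, hv⟩ := hcol p c.start_mem_support
  have hbottom := walkSum_crossesAbove_of_le_row w (hdisj p c.start_mem_support)
    (fun z hz => (hrow z hz).1) hu.le hv
  have htop := walkSum_crossesAbove_of_row_le w (fun z hz => (hrow z hz).2)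
  rw [walkSum_crossesAbove_of_disjoint w c hdisj hcol, htop] at hbottom
  exact zero_ne_one hbottom

theorem exists_natAbs_fst_lt (l : List (ℤ × ℤ)) : ∃ B : ℕ, ∀ z ∈ l, z.1.natAbs < B :=
  ⟨(l.map fun z => z.1.natAbs).sum + 1, fun _ hz =>
    Nat.lt_succ_of_le (List.single_le_sum (by simp) _ (List.mem_map_of_mem hz))⟩

theorem exists_horizontal_ray {d : ℤ} (hd : d = 1 ∨ d = -1) (p : ℤ × ℤ) (B : ℕ) :
    ∃ (q : ℤ × ℤ) (w : triGraph.Walk p q), (B : ℤ) ≤ d * q.1 ∧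
      ∀ z ∈ w.support, z.2 = p.2 ∧ (z = p ∨ d * p.1 < d * z.1) := by
  obtain ⟨w, hw⟩ := exists_ray (d := (d, 0)) (by simp [triGraph_adj, hd]) p (B + p.1.natAbs)
  refine ⟨_, w, ?_, fun z hz => ?_⟩
  · rcases hd with rfl | rfl <;>
      simp only [Prod.fst_add, Prod.smul_mk, nsmul_eq_mul] <;> omega
  · obtain ⟨i, -, rfl⟩ := hw z hz
    rcases hd with rfl | rfl <;>
      simp only [Prod.ext_iff, Prod.fst_add, Prod.snd_add, Prod.smul_mk, nsmul_eq_mul] <;> omega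

/-- The horizontal walk need not span the columns of the vertical one: extending it by horizontal
rays creates no new intersection. -/
theorem exists_mem_support_of_crossing (w : triGraph.Walk u v) (c : triGraph.Walk p p')
    (hrow : ∀ z ∈ w.support, p.2 ≤ z.2 ∧ z.2 ≤ p'.2)
    (hu : ∀ z ∈ c.support, z.2 = u.2 → u.1 ≤ z.1) (hv : ∀ z ∈ c.support, z.2 = v.2 → z.1 ≤ v.1) :
    ∃ z, z ∈ w.support ∧ z ∈ c.support := by
  obtain ⟨B, hB⟩ := exists_natAbs_fst_lt c.support
  obtain ⟨u', l, hu', hl⟩ := exists_horizontal_ray (.inr rfl) u B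
  obtain ⟨v', r, hv', hr⟩ := exists_horizontal_ray (.inl rfl) v B
  have mem_extended {z : ℤ × ℤ} : z ∈ ((l.reverse.append w).append r).support ↔
      (z ∈ l.support ∨ z ∈ w.support) ∨ z ∈ r.support := by
    simp only [SimpleGraph.Walk.mem_support_append_iff, SimpleGraph.Walk.support_reverse,
      List.mem_reverse]
  have extended_row : ∀ z ∈ ((l.reverse.append w).append r).support, p.2 ≤ z.2 ∧ z.2 ≤ p'.2 := by
    intro z hz
    rcases mem_extended.1 hz with (hz | hz) | hz
    · exact (hl z hz).1 ▸ hrow u w.start_mem_support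
    · exact hrow z hz
    · exact (hr z hz).1 ▸ hrow v w.end_mem_support
  obtain ⟨z, hz, hzc⟩ := exists_mem_support_of_fst_between _ c extended_row
    (fun z hz => by have := hB z hz; omega)
  rcases mem_extended.1 hz with (hz | hz) | hz
  · obtain rfl | hlt := (hl z hz).2
    · exact ⟨z, w.start_mem_support, hzc⟩
    · have := hu z hzc (hl z hz).1
      omega
  · exact ⟨z, hz, hzc⟩
  · obtain rfl | hlt := (hr z hz).2
    · exact ⟨z, w.end_mem_support, hzc⟩
    · have := hv z hzc (hr z hz).1
      omega

end Crossing

/-! ### The percolation measure -/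

/-- The configuration equal to `g` on `T` and to `ω` elsewhere. -/
def override (T : Finset (ℤ × ℤ)) (g : T → Bool) (ω : Config) : Config :=
  fun v => if h : v ∈ T then g ⟨v, h⟩ else ω v

section PercolationMeasure

variable {P : Measure Config} {A B : Set Config} {S T : Set (ℤ × ℤ)}

theorem override_restrict_of_mem {T : Finset (ℤ × ℤ)} {v : ℤ × ℤ} (hv : v ∈ T) (ω ω' : Config) :
    override T (T.restrict ω) ω' v = ω v := by
  simp [override, hv]

theorem override_of_notMem {T : Finset (ℤ × ℤ)} {v : ℤ × ℤ} (hv : v ∉ T) (g : T → Bool)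
    (ω : Config) : override T g ω v = ω v := by
  simp [override, hv]

theorem override_mono {T : Finset (ℤ × ℤ)} {g g' : T → Bool} {ω ω' : Config} (hg : g ≤ g')
    (hω : ω ≤ ω') : override T g ω ≤ override T g' ω' := by
  intro v
  unfold override
  split
  exacts [hg _, hω v]

theorem continuous_override (T : Finset (ℤ × ℤ)) (g : T → Bool) : Continuous (override T g) := by
  refine continuous_pi fun v => ?_
  unfold override
  split <;> fun_prop

theorem real_restrict_eq (hP : IsBernoulliHalf P) (T : Finset (ℤ × ℤ)) (g : T → Bool) :
    P.real {ω : Config | T.restrict ω = g} = (1 / 2) ^ T.card := by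
  have cylinder_eq : {ω : Config | T.restrict ω = g} =
      {ω : Config | ∀ v ∈ T, ω v = override T g ⊤ v} := by
    ext ω
    simp +contextual [funext_iff, override]
  rw [Measure.real, cylinder_eq, hP.2 T]
  simp

theorem uniformOn_univ_bool_singleton (b : Bool) :
    ProbabilityTheory.uniformOn (Set.univ : Set Bool) {b} = 1 / 2 := by
  rw [ProbabilityTheory.uniformOn_univ]
  simp

theorem eq_infinitePi_of_isBernoulliHalf (hP : IsBernoulliHalf P) :
    P = Measure.infinitePi fun _ => ProbabilityTheory.uniformOn (Set.univ : Set Bool) := by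
  have := hP.1
  refine IsProjectiveLimit.unique
    (fun T => Measure.ext_of_measureReal_singleton fun g => ?_)
    (Measure.isProjectiveLimit_infinitePi _)
  rw [map_measureReal_apply (Finset.measurable_restrict T) (measurableSet_singleton g)]
  refine (real_restrict_eq hP T g).trans ?_
  rw [Measure.real, Measure.pi_singleton]
  simp only [uniformOn_univ_bool_singleton, Finset.prod_const]
  simp

theorem measurePreserving_comp_equiv (hP : IsBernoulliHalf P) (e : ℤ × ℤ ≃ ℤ × ℤ) :
    MeasurePreserving (fun ω : Config => ω ∘ e) P P := by
  have relabel_eq : (fun ω : Config => ω ∘ e) =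
      MeasurableEquiv.piCongrLeft (fun _ => Bool) e.symm := by
    ext ω v
    simp [MeasurableEquiv.coe_piCongrLeft, Equiv.piCongrLeft_apply]
  rw [relabel_eq, eq_infinitePi_of_isBernoulliHalf hP]
  exact ⟨MeasurableEquiv.measurable _, Measure.infinitePi_map_piCongrLeft
    (fun _ => ProbabilityTheory.uniformOn (Set.univ : Set Bool)) e.symm⟩

theorem real_comp_mem (hP : IsBernoulliHalf P) (hA : MeasurableSet A) (e : ℤ × ℤ ≃ ℤ × ℤ) :
    P.real {ω | ω ∘ e ∈ A} = P.real A :=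
  (measurePreserving_comp_equiv hP e).measureReal_preimage hA.nullMeasurableSet

theorem dependsOn_inter (hA : DependsOn (· ∈ A) S) (hB : DependsOn (· ∈ B) S) :
    DependsOn (· ∈ A ∩ B) S :=
  fun _ _ h => congrArg₂ And (hA h) (hB h)

theorem measurableSet_of_dependsOn {T : Finset (ℤ × ℤ)} (hA : DependsOn (· ∈ A) T) :
    MeasurableSet A := by
  have A_eq : A = T.restrict ⁻¹' {g | override T g ⊤ ∈ A} := by
    ext ω
    exact (hA fun v hv => (override_restrict_of_mem hv ω ⊤).symm).to_iff
  rw [A_eq]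
  exact (Finset.measurable_restrict T) (Set.toFinite _).measurableSet

theorem dependsOn_restrict_eq (T : Finset (ℤ × ℤ)) (g : T → Bool) :
    DependsOn (· ∈ {ω : Config | T.restrict ω = g}) (T : Set (ℤ × ℤ)) := by
  intro ω ω' h
  have restrict_eq : T.restrict ω = T.restrict ω' := funext fun v => h v v.2
  simp [restrict_eq]

/-- The σ-algebra generated by the colour of the site `v`. -/
abbrev siteSigma (v : ℤ × ℤ) : MeasurableSpace Config :=
  MeasurableSpace.comap (fun ω => ω v) inferInstance

theorem measurableSet_iSup_siteSigma (hA : MeasurableSet A) (hS : DependsOn (· ∈ A) S) :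
    MeasurableSet[⨆ v ∈ S, siteSigma v] A := by
  classical
  have A_eq : A = (fun (ω : Config) v => if v ∈ S then ω v else true) ⁻¹' A := by
    ext ω
    exact (hS fun v hv => by simp [hv]).to_iff
  rw [A_eq]
  refine @measurable_pi_lambda _ _ _ (⨆ v ∈ S, siteSigma v) _ _ (fun v => ?_) A hA
  by_cases hv : v ∈ S
  · simp only [hv, if_true]
    exact (comap_measurable _).mono (le_iSup₂_of_le v hv le_rfl) le_rfl
  · simp only [hv, if_false]
    exact measurable_const

theorem real_inter_of_dependsOn (hP : IsBernoulliHalf P) (hST : Disjoint S T)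
    (hA : MeasurableSet A) (hAS : DependsOn (· ∈ A) S) (hB : MeasurableSet B)
    (hBT : DependsOn (· ∈ B) T) : P.real (A ∩ B) = P.real A * P.real B := by
  have sites_indep : ProbabilityTheory.iIndep siteSigma P := by
    rw [eq_infinitePi_of_isBernoulliHalf hP]
    exact ProbabilityTheory.iIndepFun_infinitePi (X := fun _ b => b) fun _ => measurable_id
  have indep := ProbabilityTheory.indep_iSup_of_disjoint
    (fun v => (measurable_pi_apply v).comap_le) sites_indep hST
  simp only [Measure.real, (ProbabilityTheory.Indep_iff _ _ _).1 indep A B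
    (measurableSet_iSup_siteSigma hA hAS) (measurableSet_iSup_siteSigma hB hBT),
    ENNReal.toReal_mul]

theorem sum_real_inter_restrict_eq (hP : IsBernoulliHalf P) (T : Finset (ℤ × ℤ))
    (A : Set Config) : ∑ g : T → Bool, P.real (A ∩ {ω | T.restrict ω = g}) = P.real A := by
  have := hP.1
  have fiber_measurable (g : T → Bool) : MeasurableSet {ω : Config | T.restrict ω = g} :=
    measurableSet_of_dependsOn (dependsOn_restrict_eq T g)
  have := sum_measureReal_preimage_singleton (μ := P.restrict A) Finset.univ
    (f := fun ω : Config => T.restrict ω) fun g _ => fiber_measurable g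
  rw [Finset.coe_univ, Set.preimage_univ, measureReal_restrict_apply_univ] at this
  rw [← this]
  refine Finset.sum_congr rfl fun g _ => ?_
  rw [Set.inter_comm, ← measureReal_restrict_apply (fiber_measurable g)]
  rfl

end PercolationMeasure

/-! ### Positive association -/

/-- Open events favoured by blue sites. Openness makes such an event a monotone limit of events
depending on finitely many sites. -/
structure BlueInc (A : Set Config) : Prop where
  isOpen : IsOpen A
  isLowerSet : IsLowerSet A

section BlueInc

variable {A B : Set Config}

theorem BlueInc.measurableSet (hA : BlueInc A) : MeasurableSet A := hA.isOpen.measurableSet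

theorem BlueInc.inter (hA : BlueInc A) (hB : BlueInc B) : BlueInc (A ∩ B) :=
  ⟨hA.isOpen.inter hB.isOpen, hA.isLowerSet.inter hB.isLowerSet⟩

theorem BlueInc.union (hA : BlueInc A) (hB : BlueInc B) : BlueInc (A ∪ B) :=
  ⟨hA.isOpen.union hB.isOpen, hA.isLowerSet.union hB.isLowerSet⟩

theorem BlueInc.iUnion {ι : Sort*} {A : ι → Set Config} (hA : ∀ i, BlueInc (A i)) :
    BlueInc (⋃ i, A i) :=
  ⟨isOpen_iUnion fun i => (hA i).isOpen, isLowerSet_iUnion fun i => (hA i).isLowerSet⟩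

theorem BlueInc.biInter {ι : Type*} {s : Finset ι} {A : ι → Set Config}
    (hA : ∀ i ∈ s, BlueInc (A i)) : BlueInc (⋂ i ∈ s, A i) :=
  ⟨isOpen_biInter_finset fun i hi => (hA i hi).isOpen,
    isLowerSet_iInter₂ fun i hi => (hA i hi).isLowerSet⟩

theorem BlueInc.preimage (hA : BlueInc A) {f : Config → Config} (hf : Continuous f)
    (hf' : Monotone f) : BlueInc (f ⁻¹' A) :=
  ⟨hA.isOpen.preimage hf, hA.isLowerSet.preimage hf'⟩

theorem BlueInc.comp_mem (hA : BlueInc A) (g : ℤ × ℤ → ℤ × ℤ) : BlueInc {ω | ω ∘ g ∈ A} :=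
  hA.preimage (f := fun ω => ω ∘ g) (by fun_prop) fun _ _ h v => h (g v)

theorem siteTime_mono (v : ℤ × ℤ) : Monotone fun ω => siteTime ω v := by
  intro ω ω' h
  have color_le : ∀ a b : Bool, a ≤ b → (if a then 1 else 0) ≤ if b then 1 else 0 := by decide
  exact color_le _ _ (h v)

theorem pathTime_mono (γ : List (ℤ × ℤ)) : Monotone fun ω => pathTime ω γ :=
  fun _ _ h => List.sum_le_sum fun v _ => siteTime_mono v h

theorem continuous_siteTime (v : ℤ × ℤ) : Continuous fun ω => siteTime ω v :=
  (continuous_of_discreteTopology (f := fun b : Bool => if b then 1 else 0)).comp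
    (continuous_apply v)

theorem continuous_pathTime (γ : List (ℤ × ℤ)) : Continuous fun ω => pathTime ω γ := by
  induction γ with
  | nil => exact continuous_const
  | cons v γ ih =>
    simp only [pathTime_cons]
    exact (continuous_siteTime v).add ih

theorem blueInc_reach (R : Set (ℤ × ℤ)) (k : ℕ) (u v : ℤ × ℤ) : BlueInc {ω | Reach ω R k u v} := by
  have reach_eq : {ω | Reach ω R k u v} =
      ⋃ w : {w : triGraph.Walk u v // ∀ z ∈ w.support, z ∈ R},
        {ω | pathTime ω w.1.support ≤ k} := by
    ext ω
    simp [Reach]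
  rw [reach_eq]
  exact .iUnion fun w => ⟨(isOpen_discrete (Set.Iic k)).preimage (continuous_pathTime _),
    (isLowerSet_Iic k).preimage (pathTime_mono _)⟩

theorem dependsOn_reach (R : Set (ℤ × ℤ)) (k : ℕ) (u v : ℤ × ℤ) :
    DependsOn (· ∈ {ω | Reach ω R k u v}) R := by
  refine fun ω ω' h => propext (exists_congr fun w => and_congr_right fun hwR => ?_)
  have siteTime_eq : w.support.map (siteTime ω) = w.support.map (siteTime ω') :=
    List.map_congr_left fun z hz => by rw [siteTime, siteTime, h z (hwR z hz)]
  rw [pathTime, pathTime, siteTime_eq]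

end BlueInc

section FiniteHarris

variable {P : Measure Config} {A B : Set Config}

theorem card_mul_card_le_of_isLowerSet {α : Type*} [DistribLattice α] [Fintype α] [DecidableEq α]
    {s t : Finset α} (hs : IsLowerSet (s : Set α)) (ht : IsLowerSet (t : Set α)) :
    s.card * t.card ≤ (s ∩ t).card * Fintype.card α := by
  refine (Finset.le_card_infs_mul_card_sups s t).trans
    (Nat.mul_le_mul (Finset.card_le_card fun x hx => ?_) (Finset.card_le_univ _))
  obtain ⟨a, ha, b, hb, rfl⟩ := Finset.mem_infs.1 hx
  exact Finset.mem_inter.2 ⟨hs inf_le_left ha, ht inf_le_right hb⟩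

open Classical in
theorem inter_restrict_eq_ite {T : Finset (ℤ × ℤ)} (hA : DependsOn (· ∈ A) T) (g : T → Bool) :
    A ∩ {ω | T.restrict ω = g} =
      if override T g ⊤ ∈ A then {ω | T.restrict ω = g} else ∅ := by
  have mem_iff {ω : Config} (hω : T.restrict ω = g) : ω ∈ A ↔ override T g ⊤ ∈ A :=
    (hA fun v hv => by rw [← hω, override_restrict_of_mem hv]).to_iff
  split_ifs with hg
  · exact Set.inter_eq_right.2 fun ω hω => (mem_iff hω).2 hg
  · exact Set.disjoint_iff_inter_eq_empty.1
      (Set.disjoint_left.2 fun ω hωA hω => hg ((mem_iff hω).1 hωA))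

open Classical in
theorem real_eq_card_div_of_dependsOn (hP : IsBernoulliHalf P) {T : Finset (ℤ × ℤ)}
    (hA : DependsOn (· ∈ A) T) :
    P.real A = (Finset.univ.filter fun g => override T g ⊤ ∈ A).card / 2 ^ T.card := by
  simp only [← sum_real_inter_restrict_eq hP T A, inter_restrict_eq_ite hA, apply_ite P.real,
    real_restrict_eq hP, measureReal_empty]
  rw [← Finset.sum_filter, Finset.sum_const, nsmul_eq_mul, one_div, inv_pow, div_eq_mul_inv]

theorem harris_of_dependsOn (hP : IsBernoulliHalf P) {T : Finset (ℤ × ℤ)}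
    (hA : IsLowerSet A) (hAT : DependsOn (· ∈ A) T) (hB : IsLowerSet B)
    (hBT : DependsOn (· ∈ B) T) : P.real A * P.real B ≤ P.real (A ∩ B) := by
  classical
  have isLowerSet_filter {E : Set Config} (hE : IsLowerSet E) :
      IsLowerSet ((Finset.univ.filter fun g => override T g ⊤ ∈ E : Finset (T → Bool)) :
        Set (T → Bool)) := by
    intro g g' h hg
    rw [Finset.mem_coe, Finset.mem_filter_univ] at hg ⊢
    exact hE (override_mono h le_rfl) hg
  have card_le := card_mul_card_le_of_isLowerSet (isLowerSet_filter hA) (isLowerSet_filter hB)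
  rw [← Finset.filter_and, Fintype.card_fun, Fintype.card_coe, Fintype.card_bool] at card_le
  rw [real_eq_card_div_of_dependsOn hP hAT, real_eq_card_div_of_dependsOn hP hBT,
    real_eq_card_div_of_dependsOn hP (dependsOn_inter hAT hBT), div_mul_div_comm,
    div_le_div_iff₀ (by positivity) (by positivity), ← mul_assoc]
  refine mul_le_mul_of_nonneg_right ?_ (by positivity)
  simp only [Set.mem_inter_iff]
  exact_mod_cast card_le

end FiniteHarris

section Truncation

variable {P : Measure Config} {A : Set Config} {n : ℕ} {v : ℤ × ℤ}

/-- The box `[-n, n]²` in lattice coordinates. -/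
def latticeBox (n : ℕ) : Finset (ℤ × ℤ) := Finset.Icc (-n, -n) (n, n)

theorem mem_latticeBox : v ∈ latticeBox n ↔ (-n ≤ v.1 ∧ v.1 ≤ n) ∧ -n ≤ v.2 ∧ v.2 ≤ n := by
  rw [latticeBox, Finset.mem_Icc, Prod.le_def, Prod.le_def, and_and_and_comm]

/-- The configuration `ω` with all sites outside `latticeBox n` made yellow. -/
def truncate (n : ℕ) (ω : Config) : Config :=
  override (latticeBox n) ((latticeBox n).restrict ω) ⊤

theorem truncate_of_mem (hv : v ∈ latticeBox n) (ω : Config) : truncate n ω v = ω v :=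
  override_restrict_of_mem hv ω ⊤

theorem truncate_of_notMem (hv : v ∉ latticeBox n) (ω : Config) : truncate n ω v = true :=
  override_of_notMem hv _ ⊤

theorem truncate_mono (n : ℕ) : Monotone (truncate n) :=
  fun _ _ h => override_mono (fun v => h v) le_rfl

theorem le_truncate (n : ℕ) (ω : Config) : ω ≤ truncate n ω := by
  intro v
  by_cases hv : v ∈ latticeBox n
  · rw [truncate_of_mem hv]
  · rw [truncate_of_notMem hv]
    exact Bool.le_true _

theorem truncate_antitone (ω : Config) : Antitone fun n => truncate n ω := by
  intro m n hmn v
  by_cases hv : v ∈ latticeBox m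
  · have hv' : v ∈ latticeBox n := by
      rw [mem_latticeBox] at hv ⊢
      omega
    exact (truncate_of_mem hv' ω).trans_le (truncate_of_mem hv ω).ge
  · exact (Bool.le_true _).trans (truncate_of_notMem hv ω).ge

theorem tendsto_truncate (ω : Config) : Tendsto (fun n => truncate n ω) atTop (𝓝 ω) := by
  refine tendsto_pi_nhds.2 fun v => tendsto_const_nhds.congr' ?_
  filter_upwards [eventually_ge_atTop (v.1.natAbs + v.2.natAbs)] with n hn
  exact (truncate_of_mem (mem_latticeBox.2 (by omega)) ω).symm

theorem dependsOn_truncate_preimage (A : Set Config) (n : ℕ) :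
    DependsOn (· ∈ truncate n ⁻¹' A) (latticeBox n : Set (ℤ × ℤ)) := by
  intro ω ω' h
  have restrict_eq : (latticeBox n).restrict ω = (latticeBox n).restrict ω' :=
    funext fun v => h v v.2
  simp [truncate, restrict_eq]

theorem BlueInc.iUnion_truncate_preimage (hA : BlueInc A) : ⋃ n, truncate n ⁻¹' A = A := by
  ext ω
  rw [Set.mem_iUnion]
  exact ⟨fun ⟨n, hn⟩ => hA.isLowerSet (le_truncate n ω) hn,
    fun hω => ((tendsto_truncate ω).eventually (hA.isOpen.mem_nhds hω)).exists⟩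

theorem BlueInc.tendsto_real_truncate_preimage (hP : IsBernoulliHalf P) (hA : BlueInc A) :
    Tendsto (fun n => P.real (truncate n ⁻¹' A)) atTop (𝓝 (P.real A)) := by
  have := hP.1
  have preimage_mono : Monotone fun n => truncate n ⁻¹' A :=
    fun m n hmn ω hω => hA.isLowerSet (truncate_antitone ω hmn) hω
  have tendsto_measure := tendsto_measure_iUnion_atTop (μ := P) preimage_mono
  rw [hA.iUnion_truncate_preimage] at tendsto_measure
  exact (ENNReal.tendsto_toReal (measure_ne_top P A)).comp tendsto_measure

end Truncation

section Harris

variable {P : Measure Config} {A B : Set Config} {U T : Finset (ℤ × ℤ)}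

theorem harris (hP : IsBernoulliHalf P) (hA : BlueInc A) (hB : BlueInc B) :
    P.real A * P.real B ≤ P.real (A ∩ B) :=
  le_of_tendsto_of_tendsto'
    ((hA.tendsto_real_truncate_preimage hP).mul (hB.tendsto_real_truncate_preimage hP))
    ((hA.inter hB).tendsto_real_truncate_preimage hP) fun n =>
      harris_of_dependsOn hP (hA.isLowerSet.preimage (truncate_mono n))
        (dependsOn_truncate_preimage A n) (hB.isLowerSet.preimage (truncate_mono n))
        (dependsOn_truncate_preimage B n)

theorem harris_biInter (hP : IsBernoulliHalf P) {ι : Type*} {A : ι → Set Config}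
    (hA : ∀ i, BlueInc (A i)) (s : Finset ι) :
    ∏ i ∈ s, P.real (A i) ≤ P.real (⋂ i ∈ s, A i) := by
  classical
  have := hP.1
  induction s using Finset.induction_on with
  | empty => simp
  | insert i s hi ih =>
    rw [Finset.prod_insert hi, Finset.set_biInter_insert]
    exact (mul_le_mul_of_nonneg_left ih measureReal_nonneg).trans
      (harris hP (hA i) (.biInter fun j _ => hA j))

theorem dependsOn_override_preimage (T : Finset (ℤ × ℤ)) (g : T → Bool) (A : Set Config) :
    DependsOn (· ∈ override T g ⁻¹' A) (T : Set (ℤ × ℤ))ᶜ := by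
  intro ω ω' h
  have override_eq : override T g ω = override T g ω' := by
    ext v
    by_cases hv : v ∈ T
    · simp [override, hv]
    · rw [override_of_notMem hv, override_of_notMem hv, h v (by simpa using hv)]
  simp [override_eq]

theorem override_eq_self {g : T → Bool} {ω : Config} (h : T.restrict ω = g) :
    override T g ω = ω := by
  ext v
  by_cases hv : v ∈ T
  · rw [← h, override_restrict_of_mem hv]
  · exact override_of_notMem hv g ω

theorem inter_restrict_eq (A : Set Config) (g : T → Bool) :
    A ∩ {ω | T.restrict ω = g} = override T g ⁻¹' A ∩ {ω | T.restrict ω = g} := by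
  ext ω
  refine and_congr_left fun h => ?_
  rw [Set.mem_preimage, override_eq_self h]

theorem real_inter_restrict_eq (hP : IsBernoulliHalf P) (hA : BlueInc A) (g : T → Bool) :
    P.real (A ∩ {ω | T.restrict ω = g}) =
      P.real (override T g ⁻¹' A) * P.real {ω : Config | T.restrict ω = g} := by
  rw [inter_restrict_eq, real_inter_of_dependsOn hP disjoint_compl_left
    ((continuous_override T g).measurable hA.measurableSet) (dependsOn_override_preimage T g A)
    (measurableSet_of_dependsOn (dependsOn_restrict_eq T g)) (dependsOn_restrict_eq T g)]

theorem BlueInc.override_preimage (hA : BlueInc A) (g : T → Bool) :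
    BlueInc (override T g ⁻¹' A) :=
  hA.preimage (continuous_override T g) fun _ _ h => override_mono le_rfl h

theorem harris_restrict_eq (hP : IsBernoulliHalf P) (hUT : Disjoint U T) (hA : BlueInc A)
    (hB : BlueInc B) (hBU : DependsOn (· ∈ B) U) (g : T → Bool) :
    P.real B * P.real (A ∩ {ω | T.restrict ω = g}) ≤
      P.real (A ∩ B ∩ {ω | T.restrict ω = g}) := by
  have B_eq : override T g ⁻¹' B = B := by
    ext ω
    exact (hBU fun v hv => override_of_notMem (Finset.disjoint_left.1 hUT hv) g ω).to_iff
  have harris_le := harris hP (hA.override_preimage g) hB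
  rw [real_inter_restrict_eq hP hA, real_inter_restrict_eq hP (hA.inter hB), Set.preimage_inter,
    B_eq, ← mul_assoc, mul_comm (P.real B)]
  exact mul_le_mul_of_nonneg_right harris_le measureReal_nonneg

theorem harris_conditional (hP : IsBernoulliHalf P) (hUT : Disjoint U T) (hA : BlueInc A)
    (hB : BlueInc B) (hBU : DependsOn (· ∈ B) U) {G : Set Config} (hG : DependsOn (· ∈ G) T) :
    P.real B * P.real (A ∩ G) ≤ P.real (A ∩ B ∩ G) := by
  rw [← sum_real_inter_restrict_eq hP T (A ∩ G), ← sum_real_inter_restrict_eq hP T (A ∩ B ∩ G),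
    Finset.mul_sum]
  refine Finset.sum_le_sum fun g _ => ?_
  rw [Set.inter_assoc, Set.inter_assoc, inter_restrict_eq_ite hG]
  split_ifs
  · exact harris_restrict_eq hP hUT hA hB hBU g
  · simp

theorem quarter_real_le_real_inter (hP : IsBernoulliHalf P) (hUT : Disjoint U T) (hA : BlueInc A)
    (hB : BlueInc B) (hBU : DependsOn (· ∈ B) U) {G : Set Config} (hG : DependsOn (· ∈ G) T)
    (hA_ge : 3 / 4 ≤ P.real A) (hG_ge : P.real Gᶜ ≤ 1 / 2) :
    1 / 4 * P.real B ≤ P.real (A ∩ B ∩ G) := by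
  have := hP.1
  have split_A := measureReal_inter_add_sdiff (μ := P) (s := A) (measurableSet_of_dependsOn hG)
  have sdiff_le : P.real (A \ G) ≤ P.real Gᶜ := measureReal_mono fun ω hω => hω.2
  have inter_ge : 1 / 4 ≤ P.real (A ∩ G) := by linarith
  calc 1 / 4 * P.real B ≤ P.real (A ∩ G) * P.real B :=
        mul_le_mul_of_nonneg_right inter_ge measureReal_nonneg
    _ = P.real B * P.real (A ∩ G) := mul_comm _ _
    _ ≤ P.real (A ∩ B ∩ G) := harris_conditional hP hUT hA hB hBU hG

section DisjointSupports

variable {A B : ℕ → Set Config} {U : ℕ → Finset (ℤ × ℤ)}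

theorem dependsOn_compl_biUnion (hBU : ∀ i, DependsOn (· ∈ B i) (U i)) (n : ℕ) :
    DependsOn (· ∈ (⋃ m ∈ Finset.range n, B m)ᶜ) ((Finset.range n).biUnion U : Set (ℤ × ℤ)) := by
  intro ω ω' h
  have mem_iff (m : ℕ) (hm : m ∈ Finset.range n) : ω ∈ B m ↔ ω' ∈ B m :=
    (hBU m fun v hv => h v (Finset.mem_biUnion.2 ⟨m, hm, hv⟩)).to_iff
  simp only [Set.mem_compl_iff, Set.mem_iUnion₂, not_exists]
  exact propext (forall₂_congr fun m hm => not_congr (mem_iff m hm))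

theorem real_biUnion_range_succ_ge (hP : IsBernoulliHalf P) (hA : ∀ i, BlueInc (A i))
    (hB : ∀ i, BlueInc (B i)) (hBU : ∀ i, DependsOn (· ∈ B i) (U i))
    (hU : Pairwise (Function.onFun Disjoint U)) {n : ℕ} (hA_ge : 3 / 4 ≤ P.real (A n))
    (hB_le : ∑ m ∈ Finset.range n, P.real (B m) ≤ 1 / 2) :
    P.real (⋃ m ∈ Finset.range n, A m ∩ B m) + 1 / 4 * P.real (B n) ≤
      P.real (⋃ m ∈ Finset.range (n + 1), A m ∩ B m) := by
  have := hP.1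
  set G : Set Config := (⋃ m ∈ Finset.range n, B m)ᶜ with hG
  have G_compl_le : P.real Gᶜ ≤ 1 / 2 := by
    rw [hG, compl_compl]
    exact (measureReal_biUnion_finset_le _ _).trans hB_le
  have supports_disjoint : Disjoint (U n) ((Finset.range n).biUnion U) :=
    (Finset.disjoint_biUnion_right _ _ _).2 fun m hm => hU (Finset.mem_range.1 hm).ne'
  have new_part_ge := quarter_real_le_real_inter hP supports_disjoint (hA n) (hB n) (hBU n)
    (dependsOn_compl_biUnion hBU n) hA_ge G_compl_le
  have old_new_disjoint : Disjoint (⋃ m ∈ Finset.range n, A m ∩ B m) (A n ∩ B n ∩ G) :=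
    Set.disjoint_left.2 fun ω hω hω' =>
      hω'.2 (Set.iUnion₂_mono (fun _ _ => Set.inter_subset_right) hω)
  have new_part_measurable : MeasurableSet (A n ∩ B n ∩ G) :=
    ((hA n).inter (hB n)).measurableSet.inter
      (measurableSet_of_dependsOn (dependsOn_compl_biUnion hBU n))
  refine (add_le_add_right new_part_ge _).trans ?_
  rw [← measureReal_union old_new_disjoint new_part_measurable (measure_ne_top P _)
    (measure_ne_top P _), Finset.range_add_one, Finset.set_biUnion_insert, Set.union_comm]
  exact measureReal_mono (Set.union_subset_union_left _ Set.inter_subset_left)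
    (measure_ne_top P _)

theorem min_le_real_biUnion_inter (hP : IsBernoulliHalf P) (hA : ∀ i, BlueInc (A i))
    (hB : ∀ i, BlueInc (B i)) (hBU : ∀ i, DependsOn (· ∈ B i) (U i))
    (hU : Pairwise (Function.onFun Disjoint U)) {n : ℕ} (hA_ge : ∀ i < n, 3 / 4 ≤ P.real (A i)) :
    min (1 / 8) (1 / 4 * ∑ m ∈ Finset.range n, P.real (B m)) ≤
      P.real (⋃ m ∈ Finset.range n, A m ∩ B m) := by
  have := hP.1
  induction n with
  | zero => simp
  | succ n ih =>
    specialize ih fun i hi => hA_ge i (by omega)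
    by_cases hB_le : ∑ m ∈ Finset.range n, P.real (B m) ≤ 1 / 2
    · have step := real_biUnion_range_succ_ge hP hA hB hBU hU (hA_ge n (by omega)) hB_le
      rw [min_eq_right (by linarith)] at ih
      rw [Finset.sum_range_succ]
      exact (min_le_right _ _).trans (by linarith)
    · rw [min_eq_left (by linarith)] at ih
      have union_subset : (⋃ m ∈ Finset.range n, A m ∩ B m) ⊆
          ⋃ m ∈ Finset.range (n + 1), A m ∩ B m :=
        Set.biUnion_subset_biUnion_left
          (Finset.coe_subset.2 (Finset.range_subset_range.2 n.le_succ))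
      exact (min_le_left _ _).trans (ih.trans (measureReal_mono union_subset (measure_ne_top P _)))

end DisjointSupports

end Harris

/-! ### Lattice symmetries -/

/-- Translation by `a`. -/
def translation (a : ℤ × ℤ) : triGraph ≃g triGraph where
  toFun v := (v.1 + a.1, v.2 + a.2)
  invFun v := (v.1 - a.1, v.2 - a.2)
  left_inv v := by ext <;> simp
  right_inv v := by ext <;> simp
  map_rel_iff' := by
    simp only [triGraph_adj, Equiv.coe_fn_mk]
    omega

theorem translation_apply (a v : ℤ × ℤ) : translation a v = (v.1 + a.1, v.2 + a.2) := rfl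

theorem translation_symm_apply (a v : ℤ × ℤ) :
    (translation a).symm v = (v.1 - a.1, v.2 - a.2) := rfl

/-- Rotation by `π/3` about the origin. -/
def rotate : triGraph ≃g triGraph where
  toFun v := (-v.2, v.1 + v.2)
  invFun v := (v.1 + v.2, -v.1)
  left_inv v := by ext <;> simp
  right_inv v := by ext <;> simp
  map_rel_iff' := by
    simp only [triGraph_adj, Equiv.coe_fn_mk]
    omega

theorem rotate_apply (v : ℤ × ℤ) : rotate v = (-v.2, v.1 + v.2) := rfl

theorem rotate_symm_apply (v : ℤ × ℤ) : rotate.symm v = (v.1 + v.2, -v.1) := rfl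

/-- Reflection across the row `r`. -/
def reflectRow (r : ℤ) : triGraph ≃g triGraph where
  toFun v := (v.1 + v.2 - r, 2 * r - v.2)
  invFun v := (v.1 + v.2 - r, 2 * r - v.2)
  left_inv v := by ext <;> simp only <;> ring
  right_inv v := by ext <;> simp only <;> ring
  map_rel_iff' := by
    simp only [triGraph_adj, Equiv.coe_fn_mk]
    omega

theorem reflectRow_apply (r : ℤ) (v : ℤ × ℤ) :
    reflectRow r v = (v.1 + v.2 - r, 2 * r - v.2) := rfl

theorem reflectRow_origin (r : ℕ) : reflectRow r (0, 0) = topVertex r := by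
  simp [reflectRow_apply, topVertex]

/-- Reflection across the vertical line through the origin. -/
def reflectCol : triGraph ≃g triGraph where
  toFun v := (-v.1 - v.2, v.2)
  invFun v := (-v.1 - v.2, v.2)
  left_inv v := by ext <;> simp
  right_inv v := by ext <;> simp
  map_rel_iff' := by
    simp only [triGraph_adj, Equiv.coe_fn_mk]
    omega

theorem reflectCol_apply (v : ℤ × ℤ) : reflectCol v = (-v.1 - v.2, v.2) := rfl

/-! ### Events of reaching a set -/

/-- The event that `u` is joined inside `R`, at cost at most `k`, to some site of `S`. -/
def reachEvent (R : Set (ℤ × ℤ)) (k : ℕ) (u : ℤ × ℤ) (S : Set (ℤ × ℤ)) : Set Config :=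
  {ω | ∃ v ∈ S, Reach ω R k u v}

section ReachEvent

variable {P : Measure Config} {R R' S S' : Set (ℤ × ℤ)} {k : ℕ} {u v : ℤ × ℤ} {ω : Config}

theorem blueInc_reachEvent (R : Set (ℤ × ℤ)) (k : ℕ) (u : ℤ × ℤ) (S : Set (ℤ × ℤ)) :
    BlueInc (reachEvent R k u S) := by
  have reachEvent_eq : reachEvent R k u S = ⋃ v ∈ S, {ω | Reach ω R k u v} := by
    ext ω
    simp [reachEvent]
  rw [reachEvent_eq]
  exact .iUnion fun v => .iUnion fun _ => blueInc_reach R k u v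

theorem Reach.map_iso (F : triGraph ≃g triGraph) (hR : Set.MapsTo F R R')
    (h : Reach (ω ∘ F) R k u v) : Reach ω R' k (F u) (F v) :=
  h.map F.toHom hR

theorem Reach.comp_iso (F : triGraph ≃g triGraph) (hR : Set.MapsTo F.symm R R')
    (h : Reach ω R k u v) : Reach (ω ∘ F) R' k (F.symm u) (F.symm v) :=
  Reach.map_iso F.symm hR (by simpa [Function.comp_assoc] using h)

theorem mem_reachEvent_of_comp_mem (F : triGraph ≃g triGraph) (hR : Set.MapsTo F R R')
    (hS : Set.MapsTo F S S') (h : ω ∘ F ∈ reachEvent R k u S) :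
    ω ∈ reachEvent R' k (F u) S' := by
  obtain ⟨v, hv, huv⟩ := h
  exact ⟨F v, hS hv, huv.map_iso F hR⟩

theorem BlueInc.real_comp_iso (hP : IsBernoulliHalf P) {A : Set Config} (hA : BlueInc A)
    (F : triGraph ≃g triGraph) : P.real {ω | ω ∘ F ∈ A} = P.real A :=
  real_comp_mem hP hA.measurableSet F.toEquiv

theorem real_reachEvent_le (hP : IsBernoulliHalf P) (F : triGraph ≃g triGraph)
    (hR : Set.MapsTo F R R') (hS : Set.MapsTo F S S') :
    P.real (reachEvent R k u S) ≤ P.real (reachEvent R' k (F u) S') := by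
  have := hP.1
  rw [← (blueInc_reachEvent R k u S).real_comp_iso hP F]
  exact measureReal_mono (fun ω => mem_reachEvent_of_comp_mem F hR hS) (measure_ne_top P _)

theorem sq_real_le_real_inter_comp (hP : IsBernoulliHalf P) {A : Set Config} (hA : BlueInc A)
    (F : triGraph ≃g triGraph) : P.real A ^ 2 ≤ P.real (A ∩ {ω | ω ∘ F ∈ A}) := by
  have harris_le := harris hP hA (hA.comp_mem F)
  rwa [hA.real_comp_iso hP, ← sq] at harris_le

theorem Reach.exists_first_visit (Q : ℤ × ℤ → Prop) (h : Reach ω R k u v) (hu : ¬ Q u)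
    (hv : Q v) : ∃ a b : ℤ × ℤ, triGraph.Adj a b ∧ a ∈ R ∧ ¬ Q a ∧ b ∈ R ∧ Q b ∧
      Reach ω (insert b {y ∈ R | ¬ Q y}) k u b := by
  obtain ⟨a, b, i, j, hab, hb, hij, hua, hbv⟩ := h.first_entrance Q hu hv
  have hub := (hua.mono_set (Set.subset_insert b _)).concat hab (Set.mem_insert b _)
  have hbj := hbv.siteTime_left_le
  exact ⟨a, b, hab, hua.right_mem.1, hua.right_mem.2, hbv.symm.right_mem, hb,
    hub.mono_cost (by omega)⟩

end ReachEvent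

/-! ### Hexagonal balls -/

/-- The ball of radius `r` around `a` in the graph metric: a hexagon. -/
def hexBall (a : ℤ × ℤ) (r : ℤ) : Set (ℤ × ℤ) :=
  {v | (-r ≤ v.1 - a.1 ∧ v.1 - a.1 ≤ r) ∧ (-r ≤ v.2 - a.2 ∧ v.2 - a.2 ≤ r) ∧
    -r ≤ v.1 + v.2 - a.1 - a.2 ∧ v.1 + v.2 - a.1 - a.2 ≤ r}

section HexBall

variable {a b c : ℤ × ℤ} {r s t : ℤ}

theorem mem_hexBall : b ∈ hexBall a r ↔
    (-r ≤ b.1 - a.1 ∧ b.1 - a.1 ≤ r) ∧ (-r ≤ b.2 - a.2 ∧ b.2 - a.2 ≤ r) ∧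
    -r ≤ b.1 + b.2 - a.1 - a.2 ∧ b.1 + b.2 - a.1 - a.2 ≤ r := Iff.rfl

theorem mem_hexBall_self (hr : 0 ≤ r) : a ∈ hexBall a r := by
  rw [mem_hexBall]
  omega

theorem mem_hexBall_of_adj (h : triGraph.Adj a b) : b ∈ hexBall a 1 := by
  rw [triGraph_adj] at h
  rw [mem_hexBall]
  omega

theorem mem_hexBall_trans (hab : b ∈ hexBall a r) (hbc : c ∈ hexBall b s) (ht : r + s ≤ t) :
    c ∈ hexBall a t := by
  rw [mem_hexBall] at *
  omega

theorem hexBall_subset (h : r ≤ s) : hexBall a r ⊆ hexBall a s := by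
  intro v hv
  rw [mem_hexBall] at *
  omega

end HexBall

/-! ### Consequences of almost sure convergence -/

/-- The event that `t_{0,n}` is within `δ log n` of `c log n` for every `n ≥ N`. -/
def logWindow (c δ : ℝ) (N : ℕ) : Set Config :=
  {ω | ∀ n ≥ N, |(tCyl ω n : ℝ) - c * Real.log n| < δ * Real.log n}

/-- The form in which almost sure convergence of `t_{0,n} / log n` to `c` is used: eventual
closeness of `t_{0,n}` to `c log n` from a deterministic time on, with probability near one. -/
def LogLaw (P : Measure Config) (c : ℝ) : Prop :=
  ∀ δ > 0, Tendsto (fun N => P.real (logWindow c δ N)) atTop (𝓝 1)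

section LogLaw

variable {P : Measure Config} {c δ b : ℝ}

theorem abs_sub_mul_log_lt {t : ℝ} {n : ℕ} (hn : 2 ≤ n) (h : |t / Real.log n - c| < δ) :
    |t - c * Real.log n| < δ * Real.log n := by
  have log_pos : 0 < Real.log n := Real.log_pos (by exact_mod_cast hn)
  rwa [div_sub' log_pos.ne', abs_div, abs_of_pos log_pos, div_lt_iff₀ log_pos, mul_comm _ c] at h

theorem logLaw_of_tendsto (hP : IsBernoulliHalf P)
    (h : P {ω : Config | Tendsto (fun n : ℕ => (tCyl ω n : ℝ) / Real.log n) atTop (𝓝 c)} = 1) :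
    LogLaw P c := by
  have := hP.1
  intro δ hδ
  have window_mono : Monotone (logWindow c δ) := fun M N hMN ω hω n hn => hω n (hMN.trans hn)
  have union_eq : P (⋃ N, logWindow c δ N) = 1 := by
    refine le_antisymm prob_le_one (h.symm.le.trans (measure_mono fun ω hω => ?_))
    have close : ∀ᶠ n : ℕ in atTop, |(tCyl ω n : ℝ) / Real.log n - c| < δ :=
      Metric.tendsto_nhds.1 hω δ hδ
    obtain ⟨N, hN⟩ := eventually_atTop.1 (close.and (eventually_ge_atTop 2))
    exact Set.mem_iUnion.2 ⟨N, fun n hn => abs_sub_mul_log_lt (hN n hn).2 (hN n hn).1⟩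
  have tendsto_union := tendsto_measure_iUnion_atTop (μ := P) window_mono
  rw [union_eq] at tendsto_union
  exact (ENNReal.tendsto_toReal ENNReal.one_ne_top).comp tendsto_union

theorem LogLaw.eventually_le_real (hlaw : LogLaw P c) (hδ : 0 < δ) (hb : 0 < b) :
    ∀ᶠ N in atTop, 1 - b ≤ P.real (logWindow c δ N) :=
  (hlaw δ hδ).eventually_const_le (by linarith)

theorem real_le_of_disjoint {A E : Set Config} (hP : IsBernoulliHalf P) (hA : MeasurableSet A)
    (hE : 1 - b ≤ P.real E) (h : Disjoint E A) : P.real A ≤ b := by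
  have := hP.1
  have union_eq : P.real (E ∪ A) = P.real E + P.real A :=
    measureReal_union h hA (measure_ne_top P _) (measure_ne_top P _)
  have union_le : P.real (E ∪ A) ≤ 1 := measureReal_le_one
  linarith

end LogLaw

/-! ### Long blue arms -/

/-- The event that `a` is joined by blue sites to distance `r`. -/
def arm (r : ℕ) (a : ℤ × ℤ) : Set Config := reachEvent Set.univ 0 a (hexBall a (r - 1))ᶜ

section Arm

variable {P : Measure Config} {ω : Config} {c : ℝ}

theorem siteTime_eq_zero_or_one (ω : Config) (v : ℤ × ℤ) :
    siteTime ω v = 0 ∨ siteTime ω v = 1 := by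
  unfold siteTime
  split <;> simp

/-- The blue cluster of `u` may carry the walk for free to a site `z` of that cluster; every
further move of size `r + 1` is paid for by a yellow site. -/
theorem exists_blue_reach_mem_hexBall {r : ℤ} (hr : 1 ≤ r) {u v : ℤ × ℤ} (w : triGraph.Walk u v)
    (small : ∀ a ∈ w.support, ∀ z, Reach ω Set.univ 0 a z → z ∈ hexBall a (r - 1)) :
    ∃ z, (z = u ∨ Reach ω Set.univ 0 u z) ∧
      v ∈ hexBall z (pathTime ω w.support * (r + 1) + 1 - siteTime ω u) := by
  induction w with
  | @nil u =>
    refine ⟨u, .inl rfl, mem_hexBall_self ?_⟩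
    rcases siteTime_eq_zero_or_one ω u with hu | hu <;>
      simp only [SimpleGraph.Walk.support_nil, pathTime, List.map_cons, List.map_nil,
        List.sum_singleton, hu] <;> push_cast <;> omega
  | @cons u c v hadj w ih =>
    obtain ⟨z, hz, hzv⟩ := ih fun a ha => small a (by simp [ha])
    rw [SimpleGraph.Walk.support_cons, pathTime_cons]
    generalize pathTime ω w.support = k at hzv ⊢
    have huc := mem_hexBall_of_adj hadj
    rcases siteTime_eq_zero_or_one ω u with hu | hu
    · rcases siteTime_eq_zero_or_one ω c with hc | hc
      · refine ⟨z, .inr ?_, by simpa [hu, hc] using hzv⟩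
        have hcz : Reach ω Set.univ 0 c z := by
          rcases hz with rfl | hz
          exacts [.refl trivial hc.le, hz]
        exact (hcz.cons hadj (Set.mem_univ u)).mono_cost (by omega)
      · have hzc : z = c := hz.resolve_right fun h => by
          have := h.siteTime_left_le
          omega
        refine ⟨u, .inl rfl, mem_hexBall_trans huc (hzc ▸ hzv) ?_⟩
        simp only [hu, hc]
        push_cast
        linarith
    · have hcz : z ∈ hexBall c (r - 1) := by
        rcases hz with rfl | hz
        exacts [mem_hexBall_self (by omega), small c (by simp) z hz]
      refine ⟨u, .inl rfl, mem_hexBall_trans huc (mem_hexBall_trans hcz hzv le_rfl) ?_⟩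
      rw [hu]
      push_cast
      linarith

theorem mem_hexBall_of_no_arm {r : ℕ} (hr : 1 ≤ r) {u v : ℤ × ℤ} (w : triGraph.Walk u v)
    (no_arm : ∀ a ∈ w.support, ω ∉ arm r a) :
    v ∈ hexBall u ((pathTime ω w.support + 1) * (r + 1)) := by
  have small : ∀ a ∈ w.support, ∀ z, Reach ω Set.univ 0 a z → z ∈ hexBall a ((r : ℤ) - 1) :=
    fun a ha z hz => by_contra fun hz' => no_arm a ha ⟨z, hz', hz⟩
  obtain ⟨z, hz, hzv⟩ := exists_blue_reach_mem_hexBall (by exact_mod_cast hr) w small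
  have huz : z ∈ hexBall u ((r : ℤ) - 1) := by
    rcases hz with rfl | hz
    exacts [mem_hexBall_self (by omega), small u w.start_mem_support z hz]
  refine mem_hexBall_trans huz hzv ?_
  have : (0 : ℤ) ≤ siteTime ω u := by positivity
  linarith

theorem exists_arm {r n k m : ℕ} (hr : 1 ≤ r) (hm : (k + 1) * (r + 1) ≤ m) (hn : m < 2 * n)
    (h : Reach ω (cyl n) k (0, 0) (topVertex n)) : ∃ a ∈ latticeBox (m + 1), ω ∈ arm r a := by
  by_contra! no_arm
  obtain ⟨a, b, hab, -, ha, -, hb, w, hwR, hwk⟩ := h.exists_first_visit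
    (fun v => v ∉ hexBall (0, 0) m) (not_not.2 (mem_hexBall_self (by positivity)))
    (by simp only [mem_hexBall, topVertex]; omega)
  have support_near : ∀ y ∈ w.support, y ∈ hexBall (0, 0) ((m : ℤ) + 1) := fun y hy => by
    rcases hwR y hy with rfl | ⟨-, hy⟩
    · exact mem_hexBall_trans (not_not.1 ha) (mem_hexBall_of_adj hab) le_rfl
    · exact hexBall_subset (by omega) (not_not.1 hy)
  have b_near := mem_hexBall_of_no_arm hr w fun y hy => no_arm y <| by
    have := support_near y hy
    rw [mem_hexBall] at this
    rw [mem_latticeBox]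
    push_cast
    omega
  refine hb (hexBall_subset ?_ b_near)
  exact_mod_cast (Nat.mul_le_mul_right _ (by omega)).trans hm

theorem real_arm_le (hP : IsBernoulliHalf P) (r : ℕ) (a : ℤ × ℤ) :
    P.real (arm r a) ≤ P.real (arm r (0, 0)) := by
  have origin_eq : translation (-a.1, -a.2) a = (0, 0) := by simp [translation_apply]
  rw [arm, arm, ← origin_eq]
  refine real_reachEvent_le hP _ (fun _ _ => trivial) fun v hv => ?_
  simp only [Set.mem_compl_iff, mem_hexBall, translation_apply] at hv ⊢
  omega

theorem card_latticeBox (n : ℕ) : (latticeBox n).card = (2 * n + 1) ^ 2 := by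
  rw [latticeBox, ← Finset.Icc_product_Icc, Finset.card_product, Int.card_Icc,
    show ((n : ℤ) + 1 - -(n : ℤ)).toNat = 2 * n + 1 by omega, sq]

theorem real_tCyl_sq_le (hP : IsBernoulliHalf P) {r k : ℕ} (hr : 2 ≤ r) (hk : k + 1 < r) :
    P.real {ω | tCyl ω (r ^ 2) ≤ k} ≤ 25 * (r : ℝ) ^ 4 * P.real (arm r (0, 0)) := by
  have := hP.1
  have cost_le : (k + 1) * (r + 1) ≤ r ^ 2 := by
    obtain ⟨d, rfl⟩ := Nat.exists_eq_add_of_lt hk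
    nlinarith
  have subset_arms : {ω | tCyl ω (r ^ 2) ≤ k} ⊆ ⋃ a ∈ latticeBox (r ^ 2 + 1), arm r a := by
    intro ω hω
    obtain ⟨a, ha, h⟩ := exists_arm (by omega) cost_le (by nlinarith)
      ((tCyl_le_iff (by nlinarith)).1 hω)
    exact Set.mem_biUnion ha h
  have card_le : (2 * ((r : ℝ) ^ 2 + 1) + 1) ^ 2 ≤ 25 * (r : ℝ) ^ 4 := by
    have hr' : (2 : ℝ) ≤ r := by exact_mod_cast hr
    calc (2 * ((r : ℝ) ^ 2 + 1) + 1) ^ 2 ≤ (5 * (r : ℝ) ^ 2) ^ 2 := by gcongr; nlinarith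
      _ = 25 * (r : ℝ) ^ 4 := by ring
  calc P.real {ω | tCyl ω (r ^ 2) ≤ k}
      ≤ ∑ a ∈ latticeBox (r ^ 2 + 1), P.real (arm r a) :=
        (measureReal_mono subset_arms (measure_ne_top P _)).trans
          (measureReal_biUnion_finset_le _ _)
    _ ≤ (latticeBox (r ^ 2 + 1)).card • P.real (arm r (0, 0)) :=
        Finset.sum_le_card_nsmul _ _ _ fun a _ => real_arm_le hP r a
    _ = (2 * ((r : ℝ) ^ 2 + 1) + 1) ^ 2 * P.real (arm r (0, 0)) := by
        rw [card_latticeBox, nsmul_eq_mul]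
        push_cast
        rfl
    _ ≤ _ := mul_le_mul_of_nonneg_right card_le measureReal_nonneg

theorem eventually_mul_log_add_one_lt (a : ℝ) :
    ∀ᶠ r : ℕ in atTop, a * Real.log r + 1 < r := by
  have log_small : (fun x : ℝ => a * Real.log x + 1) =o[atTop] fun x : ℝ => x :=
    (Real.isLittleO_log_id_atTop.const_mul_left a).add
      (Asymptotics.isLittleO_const_id_atTop (1 : ℝ))
  have log_small_nat := log_small.comp_tendsto tendsto_natCast_atTop_atTop
  filter_upwards [log_small_nat.bound one_half_pos, eventually_gt_atTop 0] with r hr hr₀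
  have hr₀' : (0 : ℝ) < r := by exact_mod_cast hr₀
  simp only [Function.comp_apply, Real.norm_eq_abs, abs_of_pos hr₀'] at hr
  linarith [le_abs_self (a * Real.log r + 1)]

theorem eventually_one_le_real_arm (hP : IsBernoulliHalf P) (hc : 0 < c) (hlaw : LogLaw P c) :
    ∀ᶠ r : ℕ in atTop, 1 ≤ 50 * (r : ℝ) ^ 4 * P.real (arm r (0, 0)) := by
  have := hP.1
  filter_upwards [hlaw.eventually_le_real hc one_half_pos, eventually_ge_atTop 2,
    eventually_mul_log_add_one_lt (4 * c)] with r window_ge hr hlog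
  set k := ⌊2 * c * Real.log (r ^ 2 : ℕ)⌋₊
  have log_sq : Real.log (r ^ 2 : ℕ) = 2 * Real.log r := by
    rw [Nat.cast_pow, Real.log_pow, Nat.cast_ofNat]
  have hk : k + 1 < r := by
    have floor_le : (k : ℝ) ≤ 2 * c * Real.log (r ^ 2 : ℕ) :=
      Nat.floor_le (mul_nonneg (by positivity) (Real.log_natCast_nonneg _))
    rw [log_sq] at floor_le
    exact_mod_cast (by linarith : (k : ℝ) + 1 < r)
  have window_subset : logWindow c c r ⊆ {ω | tCyl ω (r ^ 2) ≤ k} := fun ω hω => by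
    have := (abs_lt.1 (hω (r ^ 2) (by nlinarith))).2
    exact Nat.le_floor (by linarith)
  have tCyl_le := window_ge.trans (measureReal_mono window_subset (measure_ne_top P _))
  linarith [real_tCyl_sq_le hP hr hk]

end Arm

/-! ### Blue crossings between two opposite points -/

/-- The event that the origin is joined by blue sites, inside the ball of radius `r`, to the side
of that ball which `i` rotations carry to the top side. -/
def sideArm (r i : ℕ) : Set Config :=
  reachEvent (hexBall (0, 0) r) 0 (0, 0) {v | (rotate^[i] v).2 = r}

/-- Half of a block: a blue path climbing from the origin to `(d, r)`. -/
def halfBlock (r : ℕ) (d : ℤ) : Set Config :=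
  {ω | Reach ω ({v | v = (0, 0) ∨ 0 < v.2 ∧ v.2 ≤ r} ∩ hexBall (0, 0) (2 * r)) 0 (0, 0) (d, r)}

/-- The event that a blue path joins `0` to `i√3·r` between the two hyperplanes through these
points and near the origin. -/
def block (r : ℕ) : Set Config :=
  {ω | Reach ω (cyl r ∩ hexBall (0, 0) (4 * r)) 0 (0, 0) (topVertex r)}

theorem blueInc_block (r : ℕ) : BlueInc (block r) := blueInc_reach _ _ _ _

section Block

variable {P : Measure Config} {r : ℕ}

theorem real_sideArm_le (hP : IsBernoulliHalf P) (r i : ℕ) :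
    P.real (sideArm r i) ≤ P.real (sideArm r 0) := by
  induction i with
  | zero => exact le_rfl
  | succ i ih =>
    have step : P.real (sideArm r (i + 1)) ≤
        P.real (reachEvent (hexBall (0, 0) r) 0 (rotate (0, 0)) {v | (rotate^[i] v).2 = r}) :=
      real_reachEvent_le hP rotate
        (fun v hv => by simp only [mem_hexBall, rotate_apply] at hv ⊢; omega) fun _ hv => hv
    have rotate_origin : rotate (0, 0) = (0, 0) := by simp [rotate_apply]
    rw [rotate_origin] at step
    exact step.trans ih

theorem exists_rotate_iterate_snd_eq {v : ℤ × ℤ} (hv : v ∈ hexBall (0, 0) r)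
    (hv' : v ∉ hexBall (0, 0) ((r : ℤ) - 1)) : ∃ i < 6, (rotate^[i] v).2 = r := by
  rw [mem_hexBall] at hv hv'
  have side : v.2 = r ∨ v.1 + v.2 = r ∨ v.1 = r ∨ -v.2 = r ∨ -(v.1 + v.2) = r ∨ -v.1 = r := by
    omega
  rcases side with h | h | h | h | h | h
  · exact ⟨0, by norm_num, h⟩
  · exact ⟨1, by norm_num, h⟩
  · exact ⟨2, by norm_num, by simpa [rotate_apply] using h⟩
  · exact ⟨3, by norm_num, by simpa [rotate_apply] using h⟩
  · exact ⟨4, by norm_num, by simpa [rotate_apply, add_comm] using h⟩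
  · exact ⟨5, by norm_num, by simpa [rotate_apply] using h⟩

theorem arm_subset_biUnion_sideArm (hr : 0 < r) :
    arm r (0, 0) ⊆ ⋃ i ∈ Finset.range 6, sideArm r i := by
  rintro ω ⟨b, hb, h⟩
  obtain ⟨u, v, huv, -, hu, -, hv, huv_reach⟩ := h.exists_first_visit
    (· ∉ hexBall (0, 0) ((r : ℤ) - 1)) (not_not.2 (mem_hexBall_self (by omega))) hb
  have hvr : v ∈ hexBall (0, 0) r :=
    mem_hexBall_trans (not_not.1 hu) (mem_hexBall_of_adj huv) (by omega)
  obtain ⟨i, hi, hvi⟩ := exists_rotate_iterate_snd_eq hvr hv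
  refine Set.mem_biUnion (Finset.mem_range.2 hi) ⟨v, hvi, huv_reach.mono_set ?_⟩
  exact Set.insert_subset hvr fun y hy => hexBall_subset (by omega) (not_not.1 hy.2)

/-- The last visit of a blue path from the origin to the row `0` starts a half block. -/
theorem sideArm_zero_subset_biUnion_halfBlock (hr : 0 < r) : sideArm r 0 ⊆
    ⋃ p ∈ latticeBox (2 * r), {ω | ω ∘ translation (p.1, 0) ∈ halfBlock r p.2} := by
  rintro ω ⟨b, hb, h⟩
  replace hb : b.2 = r := hb
  obtain ⟨u, v, huv, -, hu, hvr, hv, h'⟩ := h.symm.exists_first_visit (·.2 ≤ 0) (by omega) le_rfl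
  have hv₂ : v.2 = 0 := by
    rw [triGraph_adj] at huv
    omega
  have hbr := h.right_mem
  rw [mem_hexBall] at hbr hvr
  refine Set.mem_biUnion (x := (v.1, b.1 - v.1)) ?_ ?_
  · rw [Finset.mem_coe, mem_latticeBox]
    push_cast
    omega
  · have v_eq : (translation (v.1, 0)).symm v = (0, 0) := by simp [translation_symm_apply, hv₂]
    have b_eq : (translation (v.1, 0)).symm b = (b.1 - v.1, (r : ℤ)) := by
      simp [translation_symm_apply, hb]
    rw [Set.mem_ofPred_eq, halfBlock, ← v_eq, ← b_eq]
    refine h'.symm.comp_iso _ fun z hz => ?_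
    simp only [Set.mem_insert_iff, Set.mem_ofPred_eq, Set.mem_inter_iff, mem_hexBall,
      translation_symm_apply, Prod.ext_iff] at hz ⊢
    omega

theorem exists_real_sideArm_le_real_halfBlock (hP : IsBernoulliHalf P) (hr : 0 < r) :
    ∃ d, P.real (sideArm r 0) ≤ (4 * r + 1 : ℝ) ^ 2 * P.real (halfBlock r d) := by
  have := hP.1
  obtain ⟨q, -, q_max⟩ := (latticeBox (2 * r)).exists_max_image
    (fun p => P.real (halfBlock r p.2)) ⟨0, mem_latticeBox.2 (by simp)⟩
  refine ⟨q.2, ?_⟩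
  calc P.real (sideArm r 0)
      ≤ ∑ p ∈ latticeBox (2 * r), P.real {ω | ω ∘ translation (p.1, 0) ∈ halfBlock r p.2} :=
        (measureReal_mono (sideArm_zero_subset_biUnion_halfBlock hr) (measure_ne_top P _)).trans
          (measureReal_biUnion_finset_le _ _)
    _ = ∑ p ∈ latticeBox (2 * r), P.real (halfBlock r p.2) :=
        Finset.sum_congr rfl fun p _ => (blueInc_reach _ _ _ _).real_comp_iso hP _
    _ ≤ (latticeBox (2 * r)).card • P.real (halfBlock r q.2) :=
        Finset.sum_le_card_nsmul _ _ _ q_max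
    _ = (4 * r + 1 : ℝ) ^ 2 * P.real (halfBlock r q.2) := by
        rw [card_latticeBox, nsmul_eq_mul]
        push_cast
        ring

theorem sq_real_halfBlock_le (hP : IsBernoulliHalf P) (r : ℕ) (d : ℤ) :
    P.real (halfBlock r d) ^ 2 ≤ P.real (block r) := by
  have := hP.1
  refine (sq_real_le_real_inter_comp hP (blueInc_reach _ _ _ _) (reflectRow r)).trans
    (measureReal_mono (fun ω hω => ?_) (measure_ne_top P _))
  have lower : Reach ω (cyl r ∩ hexBall (0, 0) (4 * r)) 0 (0, 0) (d, r) := hω.1.mono_set <| by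
    intro z hz
    simp only [Set.mem_inter_iff, Set.mem_ofPred_eq, mem_hexBall, mem_cyl, Prod.ext_iff] at hz ⊢
    omega
  have upper : Reach ω (cyl r ∩ hexBall (0, 0) (4 * r)) 0 (reflectRow r (0, 0))
      (reflectRow r (d, r)) := hω.2.map_iso _ fun z hz => by
    simp only [Set.mem_inter_iff, Set.mem_ofPred_eq, mem_hexBall, mem_cyl, Prod.ext_iff,
      reflectRow_apply] at hz ⊢
    omega
  have fixed : reflectRow r (d, r) = (d, (r : ℤ)) := by
    simp only [reflectRow_apply, Prod.mk.injEq]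
    omega
  rw [reflectRow_origin, fixed] at upper
  exact lower.trans upper.symm

theorem exists_real_arm_le_real_halfBlock (hP : IsBernoulliHalf P) (hr : 0 < r) :
    ∃ d, P.real (arm r (0, 0)) ≤ 150 * (r : ℝ) ^ 2 * P.real (halfBlock r d) := by
  have := hP.1
  obtain ⟨d, hd⟩ := exists_real_sideArm_le_real_halfBlock hP hr
  refine ⟨d, ?_⟩
  have hr' : (1 : ℝ) ≤ r := by exact_mod_cast hr
  calc P.real (arm r (0, 0))
      ≤ ∑ i ∈ Finset.range 6, P.real (sideArm r i) :=
        (measureReal_mono (arm_subset_biUnion_sideArm hr) (measure_ne_top P _)).trans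
          (measureReal_biUnion_finset_le _ _)
    _ ≤ (Finset.range 6).card • P.real (sideArm r 0) :=
        Finset.sum_le_card_nsmul _ _ _ fun i _ => real_sideArm_le hP r i
    _ = 6 * P.real (sideArm r 0) := by simp
    _ ≤ 6 * ((5 * r : ℝ) ^ 2 * P.real (halfBlock r d)) := by
        gcongr
        exact hd.trans (by gcongr; linarith)
    _ = 150 * (r : ℝ) ^ 2 * P.real (halfBlock r d) := by ring

theorem eventually_one_le_real_block (hP : IsBernoulliHalf P) {c : ℝ} (hc : 0 < c)
    (hlaw : LogLaw P c) : ∀ᶠ r : ℕ in atTop, 1 ≤ (r : ℝ) ^ 13 * P.real (block r) := by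
  filter_upwards [eventually_one_le_real_arm hP hc hlaw, eventually_ge_atTop (7500 ^ 2)]
    with r arm_ge hr
  have hr' : (7500 ^ 2 : ℝ) ≤ r := by exact_mod_cast hr
  obtain ⟨d, hd⟩ := exists_real_arm_le_real_halfBlock hP (by omega : 0 < r)
  have halfBlock_ge : 1 ≤ 7500 * (r : ℝ) ^ 6 * P.real (halfBlock r d) :=
    calc (1 : ℝ) ≤ 50 * (r : ℝ) ^ 4 * P.real (arm r (0, 0)) := arm_ge
      _ ≤ 50 * (r : ℝ) ^ 4 * (150 * (r : ℝ) ^ 2 * P.real (halfBlock r d)) := by gcongr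
      _ = 7500 * (r : ℝ) ^ 6 * P.real (halfBlock r d) := by ring
  calc (1 : ℝ) ≤ (7500 * (r : ℝ) ^ 6 * P.real (halfBlock r d)) ^ 2 := one_le_pow₀ halfBlock_ge
    _ = 7500 ^ 2 * (r : ℝ) ^ 12 * P.real (halfBlock r d) ^ 2 := by ring
    _ ≤ r * (r : ℝ) ^ 12 * P.real (block r) := by
        gcongr
        exact sq_real_halfBlock_le hP r d
    _ = (r : ℝ) ^ 13 * P.real (block r) := by ring

end Block

/-! ### Leaving a wide box at low cost is unlikely -/

/-- The rows strictly between the hyperplanes `H_0` and `H_n`. -/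
def openStrip (n : ℕ) : Set (ℤ × ℤ) := {v | 0 < v.2 ∧ v.2 < 2 * n}

/-- The open strip together with the origin. -/
def strip (n : ℕ) : Set (ℤ × ℤ) := insert (0, 0) (openStrip n)

/-- The open strip together with `i√3·n`, the mirror image of `strip n`. -/
def topStrip (n : ℕ) : Set (ℤ × ℤ) := insert (topVertex n) (openStrip n)

/-- The sites on or above the last row of the open strip of `r`, or at horizontal distance `r ^ 15`
or more from the origin. The horizontal position is `2x + y`, twice the real part. -/
def exitSet (r : ℕ) : Set (ℤ × ℤ) := {z | 2 * r - 1 ≤ z.2 ∨ (r : ℤ) ^ 15 ≤ |2 * z.1 + z.2|}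

/-- The right half of the last row of the open strip of `r`. -/
def topRight (r : ℕ) : Set (ℤ × ℤ) := {z | z.2 = 2 * r - 1 ∧ 0 < 2 * z.1 + z.2}

/-- The sites at horizontal distance `r ^ 15` or more to the right of the origin. -/
def farRight (r : ℕ) : Set (ℤ × ℤ) := {z | (r : ℤ) ^ 15 ≤ 2 * z.1 + z.2}

section Walk

variable {ω : Config} {R : Set (ℤ × ℤ)} {k l n : ℕ} {s t u v z : ℤ × ℤ}

theorem mem_strip : z ∈ strip n ↔ (z.1 = 0 ∧ z.2 = 0) ∨ 0 < z.2 ∧ z.2 < 2 * n := by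
  simp only [strip, openStrip, Set.mem_insert_iff, Set.mem_ofPred_eq, Prod.ext_iff]

theorem mem_topStrip : z ∈ topStrip n ↔ (z.1 = -n ∧ z.2 = 2 * n) ∨ 0 < z.2 ∧ z.2 < 2 * n := by
  simp only [topStrip, openStrip, topVertex, Set.mem_insert_iff, Set.mem_ofPred_eq, Prod.ext_iff]

theorem openStrip_subset_cyl (n : ℕ) : openStrip n ⊆ cyl n := fun _ hz => .inr (.inr hz)

theorem strip_subset_cyl (n : ℕ) : strip n ⊆ cyl n :=
  Set.insert_subset (.inl rfl) (openStrip_subset_cyl n)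

theorem topStrip_subset_cyl (n : ℕ) : topStrip n ⊆ cyl n :=
  Set.insert_subset (.inr (.inl rfl)) (openStrip_subset_cyl n)

theorem reach_of_mem_support {w : triGraph.Walk u v} (hR : ∀ z ∈ w.support, z ∈ R)
    (hk : pathTime ω w.support ≤ k) (hz : z ∈ w.support) : Reach ω R k u z :=
  ⟨w.takeUntil z hz, fun y hy => hR y (w.support_takeUntil_subset_support hz hy),
    (pathTime_le_of_sublist ω (w.support_takeUntil_prefix_support hz).sublist).trans hk⟩

theorem reach_of_walks_meet {w : triGraph.Walk u v} {w' : triGraph.Walk s t}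
    (hR : ∀ z ∈ w.support, z ∈ R) (hk : pathTime ω w.support ≤ k)
    (hR' : ∀ z ∈ w'.support, z ∈ R) (hl : pathTime ω w'.support ≤ l)
    (hz : z ∈ w.support) (hz' : z ∈ w'.support) : Reach ω R (k + l) u s :=
  (reach_of_mem_support hR hk hz).trans (reach_of_mem_support hR' hl hz').symm

end Walk

section Exit

variable {P : Measure Config} {ω : Config} {r k : ℕ}

theorem exists_reach_of_comp_reflectRow {S : Set (ℤ × ℤ)}
    (h : ω ∘ reflectRow r ∈ reachEvent (strip r) k (0, 0) S) :
    ∃ z ∈ S, Reach ω (topStrip r) k (topVertex r) (reflectRow r z) := by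
  obtain ⟨z, hz, h⟩ := h
  refine ⟨z, hz, reflectRow_origin r ▸ h.map_iso _ fun y hy => ?_⟩
  simp only [mem_strip, mem_topStrip, reflectRow_apply] at hy ⊢
  omega

theorem exists_mem_support_of_top_right {y z : ℤ × ℤ} (γ : triGraph.Walk (0, 0) z)
    (β : triGraph.Walk (topVertex r) y) (hγ : ∀ x ∈ γ.support, x ∈ strip r)
    (hβ : ∀ x ∈ β.support, x ∈ topStrip r) (hz : z.2 = 2 * r - 1) (hz' : -r < z.1)
    (hy : y.2 = 1) (hy' : 0 ≤ y.1) : ∃ x, x ∈ γ.support ∧ x ∈ β.support := by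
  simp only [mem_strip] at hγ
  simp only [mem_topStrip] at hβ
  have hr : 0 < r := by
    have := hγ z γ.end_mem_support
    omega
  have step_down : triGraph.Adj y (y.1 + 1, 0) := by
    simp only [triGraph_adj, true_and]
    omega
  have step_up : triGraph.Adj z (z.1, 2 * (r : ℤ)) := by
    simp only [triGraph_adj, true_and]
    omega
  have mem_γ {x : ℤ × ℤ} : x ∈ (γ.concat step_up).support ↔
      x ∈ γ.support ∨ x.1 = z.1 ∧ x.2 = 2 * r := by
    rw [mem_support_concat, Prod.ext_iff]
  have mem_β {x : ℤ × ℤ} : x ∈ (β.concat step_down).support ↔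
      x ∈ β.support ∨ x.1 = y.1 + 1 ∧ x.2 = 0 := by
    rw [mem_support_concat, Prod.ext_iff]
  obtain ⟨x, hxβ, hxγ⟩ := exists_mem_support_of_crossing (β.concat step_down) (γ.concat step_up)
    (fun x hx => by have := (mem_β.1 hx).imp_left (hβ x); simp only; omega)
    (fun x hx hrow => by
      have := (mem_γ.1 hx).imp_left (hγ x)
      simp only [topVertex] at hrow ⊢
      omega)
    (fun x hx hrow => by
      have := (mem_γ.1 hx).imp_left (hγ x)
      simp only at hrow ⊢
      omega)
  rcases mem_γ.1 hxγ with hxγ | hxγ <;> rcases mem_β.1 hxβ with hxβ | hxβ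
  · exact ⟨x, hxγ, hxβ⟩
  · have := hγ x hxγ
    omega
  · have := hβ x hxβ
    omega
  · omega

theorem reach_of_top_right (h : ω ∈ reachEvent (strip r) k (0, 0) (topRight r))
    (h' : ω ∘ reflectRow r ∈ reachEvent (strip r) k (0, 0) (topRight r)) :
    Reach ω (cyl r) (2 * k) (0, 0) (topVertex r) := by
  obtain ⟨z, ⟨hz, hz'⟩, γ, hγ, hγk⟩ := h
  obtain ⟨y, ⟨hy, hy'⟩, β, hβ, hβk⟩ := exists_reach_of_comp_reflectRow h'
  obtain ⟨x, hxγ, hxβ⟩ := exists_mem_support_of_top_right γ β hγ hβ hz (by omega)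
    (by simp only [reflectRow_apply]; omega) (by simp only [reflectRow_apply]; omega)
  rw [two_mul]
  exact reach_of_walks_meet (fun x hx => strip_subset_cyl r (hγ x hx)) hγk
    (fun x hx => topStrip_subset_cyl r (hβ x hx)) hβk hxγ hxβ

theorem exists_open_crossing_of_block (hr : 0 < r) {p : ℤ × ℤ} (hp : p.2 = 0)
    (h : ω ∘ translation p ∈ block r) :
    ∃ (a b : ℤ × ℤ) (w : triGraph.Walk a b), a.2 = 1 ∧ b.2 = 2 * r - 1 ∧
      (∀ z ∈ w.support, z ∈ openStrip r ∩ hexBall p (4 * r)) ∧ pathTime ω w.support = 0 := by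
  have across : Reach ω ({z | 0 ≤ z.2 ∧ z.2 ≤ 2 * r} ∩ hexBall p (4 * r)) 0
      (translation p (0, 0)) (translation p (topVertex r)) := by
    refine Reach.map_iso _ (fun z hz => ?_) h
    simp only [Set.mem_inter_iff, mem_cyl, Set.mem_ofPred_eq, mem_hexBall,
      translation_apply] at hz ⊢
    omega
  obtain ⟨a, a', i, j, haa', ha', hij, down, -⟩ := across.symm.first_entrance (·.2 ≤ 0)
    (by simp only [translation_apply, topVertex]; omega) (by simp only [translation_apply]; omega)
  obtain ⟨b, b', i', j', hbb', hb', hij', ⟨w, hw, hwk⟩, -⟩ :=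
    down.symm.first_entrance (2 * (r : ℤ) ≤ ·.2) (by rw [triGraph_adj] at haa'; omega)
      (by simp only [translation_apply, topVertex]; omega)
  have ha := down.right_mem.2
  have hb := (hw b w.end_mem_support).2
  rw [triGraph_adj] at haa' hbb'
  refine ⟨a, b, w, by omega, by omega, fun z hz => ?_, by omega⟩
  obtain ⟨⟨⟨-, hz_ball⟩, hz_pos⟩, hz_lt⟩ := hw z hz
  exact ⟨⟨not_le.1 hz_pos, not_le.1 hz_lt⟩, hz_ball⟩

theorem exists_mem_support_of_open_crossing {p q s t : ℤ × ℤ} (w : triGraph.Walk p q)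
    (l : triGraph.Walk s t) (hp : p.2 = 1) (hq : q.2 = 2 * r - 1)
    (hw : ∀ z ∈ w.support, 2 * s.1 + s.2 + 1 < 2 * z.1 + z.2 ∧ 2 * z.1 + z.2 + 1 < 2 * t.1 + t.2)
    (hs : 0 ≤ s.2 ∧ s.2 ≤ 2 * r) (hl : ∀ x ∈ l.support, x = s ∨ x ∈ openStrip r) :
    ∃ x, x ∈ l.support ∧ x ∈ w.support := by
  have step_down : triGraph.Adj (p.1, 0) p := by
    simp only [triGraph_adj, true_and]
    omega
  have step_up : triGraph.Adj q (q.1, 2 * (r : ℤ)) := by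
    simp only [triGraph_adj, true_and]
    omega
  have mem_extended {x : ℤ × ℤ} : x ∈ ((SimpleGraph.Walk.cons step_down w).concat step_up).support ↔
      (x = (p.1, 0) ∨ x ∈ w.support) ∨ x = (q.1, 2 * (r : ℤ)) := by
    rw [mem_support_concat, SimpleGraph.Walk.support_cons, List.mem_cons]
  have extended_between {x : ℤ × ℤ}
      (hx : x ∈ ((SimpleGraph.Walk.cons step_down w).concat step_up).support) :
      2 * s.1 + s.2 < 2 * x.1 + x.2 ∧ 2 * x.1 + x.2 < 2 * t.1 + t.2 := by
    have hwp := hw p w.start_mem_support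
    have hwq := hw q w.end_mem_support
    rcases mem_extended.1 hx with (rfl | hx) | rfl
    · simp only
      omega
    · have := hw x hx
      omega
    · simp only
      omega
  obtain ⟨x, hxl, hx⟩ := exists_mem_support_of_crossing l _
    (fun x hx => (hl x hx).elim (fun h => h ▸ hs) fun h => ⟨h.1.le, h.2.le⟩)
    (fun x hx hrow => by have := extended_between hx; omega)
    (fun x hx hrow => by have := extended_between hx; omega)
  have hx_open : x ∈ openStrip r :=
    (hl x hxl).resolve_left (by rintro rfl; exact lt_irrefl _ (extended_between hx).1)
  refine ⟨x, hxl, ?_⟩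
  rcases mem_extended.1 hx with (rfl | hxw) | rfl
  · exact absurd hx_open.1 (lt_irrefl _)
  · exact hxw
  · exact absurd hx_open.2 (lt_irrefl _)

/-- A block standing between the endpoints of the strip and its far right is crossed by both of the
low-cost paths, and so joins them for free. -/
theorem reach_of_far_right_of_block (hr : 0 < r) {a : ℤ}
    (h : ω ∈ reachEvent (strip r) k (0, 0) (farRight r))
    (h' : ω ∘ reflectRow r ∈ reachEvent (strip r) k (0, 0) (farRight r))
    (ha : 12 * (r : ℤ) + 1 < 2 * a) (ha' : 2 * a + 12 * r + 1 < (r : ℤ) ^ 15)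
    (hblock : ω ∘ translation (a, 0) ∈ block r) :
    Reach ω (cyl r) (2 * k) (0, 0) (topVertex r) := by
  obtain ⟨z, hz, γ, hγ, hγk⟩ := h
  obtain ⟨y, hy, β, hβ, hβk⟩ := exists_reach_of_comp_reflectRow h'
  obtain ⟨p, q, w, hp, hq, hw, hwk⟩ := exists_open_crossing_of_block hr rfl hblock
  have between : ∀ x ∈ w.support, 1 < 2 * x.1 + x.2 ∧ 2 * x.1 + x.2 + 1 < (r : ℤ) ^ 15 :=
    fun x hx => by
      have := (hw x hx).2
      rw [mem_hexBall] at this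
      omega
  have y_horizontal : 2 * (reflectRow r y).1 + (reflectRow r y).2 = 2 * y.1 + y.2 := by
    simp only [reflectRow_apply]
    ring
  have hz : (r : ℤ) ^ 15 ≤ 2 * z.1 + z.2 := hz
  have hy : (r : ℤ) ^ 15 ≤ 2 * y.1 + y.2 := hy
  obtain ⟨x, hxγ, hxw⟩ := exists_mem_support_of_open_crossing w γ hp hq
    (fun x hx => by have := between x hx; simp only; omega) (by simp) hγ
  obtain ⟨x', hxβ, hxw'⟩ := exists_mem_support_of_open_crossing w β hp hq
    (fun x hx => by have := between x hx; simp only [topVertex]; omega) (by simp [topVertex]) hβ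
  have w_subset : ∀ z ∈ w.support, z ∈ cyl r := fun z hz => openStrip_subset_cyl r (hw z hz).1
  have from_origin := reach_of_walks_meet (fun x hx => strip_subset_cyl r (hγ x hx)) hγk
    w_subset hwk.le hxγ hxw
  have from_top := reach_of_walks_meet (fun x hx => topStrip_subset_cyl r (hβ x hx)) hβk
    w_subset hwk.le hxβ hxw'
  exact (from_origin.trans from_top.symm).mono_cost (by omega)

end Exit

section ExitProbability

variable {P : Measure Config} {r k : ℕ}

/-- The box of lattice coordinates within `m` of those of `a`. -/
def boxAt (a : ℤ × ℤ) (m : ℕ) : Finset (ℤ × ℤ) :=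
  Finset.Icc (a.1 - m, a.2 - m) (a.1 + m, a.2 + m)

theorem mem_boxAt {a v : ℤ × ℤ} {m : ℕ} : v ∈ boxAt a m ↔
    (a.1 - m ≤ v.1 ∧ v.1 ≤ a.1 + m) ∧ a.2 - m ≤ v.2 ∧ v.2 ≤ a.2 + m := by
  rw [boxAt, Finset.mem_Icc, Prod.le_def, Prod.le_def]
  tauto

theorem disjoint_boxAt {a b : ℤ × ℤ} {m : ℕ} (h : a.1 + 2 * m < b.1 ∨ a.2 + 2 * m < b.2) :
    Disjoint (boxAt a m) (boxAt b m) := by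
  rw [Finset.disjoint_left]
  intro v hva hvb
  rw [mem_boxAt] at hva hvb
  omega

theorem dependsOn_comp_mem {A : Set Config} {S T : Set (ℤ × ℤ)} {g : ℤ × ℤ → ℤ × ℤ}
    (hA : DependsOn (· ∈ A) S) (hg : Set.MapsTo g S T) :
    DependsOn (· ∈ {ω : Config | ω ∘ g ∈ A}) T :=
  fun _ _ h => hA fun v hv => h (g v) (hg hv)

theorem dependsOn_block (r : ℕ) : DependsOn (· ∈ block r) (hexBall (0, 0) (4 * r)) :=
  (dependsOn_reach _ _ _ _).mono Set.inter_subset_right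

theorem eighth_le_real_biUnion_block (hP : IsBernoulliHalf P) (hr : 0 < r)
    (hblock : 1 ≤ (r : ℝ) ^ 13 * P.real (block r)) :
    1 / 8 ≤ P.real (⋃ i ∈ Finset.range (r ^ 13),
      {ω : Config | ω ∘ translation (10 * r * (i + 1), 0) ∈ block r}) := by
  have := hP.1
  have supports_disjoint : Pairwise (Function.onFun Disjoint
      fun i : ℕ => boxAt (10 * r * (i + 1), 0) (4 * r)) := by
    refine (pairwise_disjoint_on _).2 fun i j hij => disjoint_boxAt (.inl ?_)
    have : (r : ℤ) * (i + 1) ≤ r * j := by gcongr; exact_mod_cast hij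
    push_cast
    linarith
  have supported (i : ℕ) : DependsOn
      (· ∈ {ω : Config | ω ∘ translation (10 * r * (i + 1), 0) ∈ block r})
      (boxAt (10 * r * (i + 1), 0) (4 * r) : Set (ℤ × ℤ)) :=
    dependsOn_comp_mem (dependsOn_block r) fun v hv => by
      simp only [mem_hexBall, Finset.mem_coe, mem_boxAt, translation_apply] at hv ⊢
      push_cast
      omega
  have union_ge := min_le_real_biUnion_inter hP (A := fun _ => Set.univ) (n := r ^ 13)
    (fun _ => ⟨isOpen_univ, isLowerSet_univ⟩) (fun i => (blueInc_block r).comp_mem _) supported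
    supports_disjoint (fun _ _ => by norm_num)
  simp only [Set.univ_inter, (blueInc_block r).real_comp_iso hP, Finset.sum_const,
    Finset.card_range, nsmul_eq_mul, Nat.cast_pow] at union_ge
  exact (le_min (le_refl _) (by linarith)).trans union_ge

theorem real_topRight_le (hP : IsBernoulliHalf P)
    (hlow : P.real {ω | Reach ω (cyl r) (2 * k) (0, 0) (topVertex r)} ≤ 1 / 10000) :
    P.real (reachEvent (strip r) k (0, 0) (topRight r)) ≤ 1 / 100 := by
  have := hP.1
  have meet : reachEvent (strip r) k (0, 0) (topRight r) ∩
      {ω | ω ∘ reflectRow r ∈ reachEvent (strip r) k (0, 0) (topRight r)} ⊆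
      {ω | Reach ω (cyl r) (2 * k) (0, 0) (topVertex r)} :=
    fun ω hω => reach_of_top_right hω.1 hω.2
  have sq_le := (sq_real_le_real_inter_comp hP (blueInc_reachEvent _ _ _ _) _).trans
    ((measureReal_mono meet (measure_ne_top P _)).trans hlow)
  exact le_of_sq_le_sq (by linarith) (by norm_num)

theorem real_farRight_le (hP : IsBernoulliHalf P) (hr : 40 ≤ r)
    (hblock : 1 ≤ (r : ℝ) ^ 13 * P.real (block r))
    (hlow : P.real {ω | Reach ω (cyl r) (2 * k) (0, 0) (topVertex r)} ≤ 1 / 10000) :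
    P.real (reachEvent (strip r) k (0, 0) (farRight r)) ≤ 1 / 30 := by
  have := hP.1
  have hfar := blueInc_reachEvent (strip r) k (0, 0) (farRight r)
  set far := reachEvent (strip r) k (0, 0) (farRight r)
  set blocks := ⋃ i ∈ Finset.range (r ^ 13),
    {ω : Config | ω ∘ translation (10 * r * (i + 1), 0) ∈ block r}
  have bridged : (far ∩ {ω | ω ∘ reflectRow r ∈ far}) ∩ blocks ⊆
      {ω | Reach ω (cyl r) (2 * k) (0, 0) (topVertex r)} := by
    rintro ω ⟨⟨hω, hω'⟩, hblocks⟩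
    obtain ⟨i, hi, hωi⟩ := Set.mem_iUnion₂.1 hblocks
    have r_ge : (40 : ℤ) ≤ r := by exact_mod_cast hr
    have hi' : (i : ℤ) + 1 ≤ (r : ℤ) ^ 13 := by exact_mod_cast Finset.mem_range.1 hi
    refine reach_of_far_right_of_block (by omega) hω hω' (by nlinarith only [r_ge]) ?_ hωi
    have pow_ge : (1 : ℤ) ≤ r ^ 13 := one_le_pow₀ (by omega)
    calc 2 * (10 * r * (i + 1)) + 12 * (r : ℤ) + 1
        ≤ 2 * (10 * r * r ^ 13) + 12 * (r * r ^ 13) + r * r ^ 13 := by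
          gcongr <;> nlinarith only [r_ge, pow_ge]
      _ = 33 * (r * r ^ 13) := by ring
      _ < r * (r * r ^ 13) := by gcongr; omega
      _ = (r : ℤ) ^ 15 := by ring
  have chain : P.real far ^ 2 * (1 / 8) ≤ 1 / 10000 :=
    calc P.real far ^ 2 * (1 / 8)
        ≤ P.real (far ∩ {ω | ω ∘ reflectRow r ∈ far}) * P.real blocks := by
          gcongr
          · exact sq_real_le_real_inter_comp hP hfar _
          · exact eighth_le_real_biUnion_block hP (by omega) hblock
      _ ≤ P.real ((far ∩ {ω | ω ∘ reflectRow r ∈ far}) ∩ blocks) :=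
          harris hP (hfar.inter (hfar.comp_mem _))
            (.iUnion fun i => .iUnion fun _ => (blueInc_block r).comp_mem _)
      _ ≤ 1 / 10000 := (measureReal_mono bridged (measure_ne_top P _)).trans hlow
  exact le_of_sq_le_sq (by linarith) (by norm_num)

theorem reachEvent_exitSet_subset (hr : 0 < r) (k : ℕ) :
    reachEvent (strip r) k (0, 0) (exitSet r) ⊆
    (reachEvent (strip r) k (0, 0) (topRight r) ∪ reachEvent (strip r) k (0, 0) (farRight r)) ∪
    {ω | ω ∘ reflectCol ∈
      reachEvent (strip r) k (0, 0) (topRight r) ∪ reachEvent (strip r) k (0, 0) (farRight r)} := by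
  rintro ω ⟨z, hz, h⟩
  have reflected : Reach (ω ∘ reflectCol) (strip r) k (0, 0) (reflectCol z) :=
    h.comp_iso reflectCol fun v hv => by
      change reflectCol v ∈ _
      simp only [mem_strip, reflectCol_apply] at hv ⊢
      omega
  have z_mem := h.right_mem
  simp only [exitSet, le_abs, Set.mem_ofPred_eq, mem_strip] at hz z_mem
  have sides : (z ∈ topRight r ∨ z ∈ farRight r) ∨
      reflectCol z ∈ topRight r ∨ reflectCol z ∈ farRight r := by
    simp only [topRight, farRight, Set.mem_ofPred_eq, reflectCol_apply]
    omega
  rcases sides with (hz | hz) | hz | hz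
  · exact .inl (.inl ⟨z, hz, h⟩)
  · exact .inl (.inr ⟨z, hz, h⟩)
  · exact .inr (.inl ⟨_, hz, reflected⟩)
  · exact .inr (.inr ⟨_, hz, reflected⟩)

theorem real_reachEvent_exitSet_le (hP : IsBernoulliHalf P) (hr : 40 ≤ r)
    (hblock : 1 ≤ (r : ℝ) ^ 13 * P.real (block r))
    (hlow : P.real {ω | Reach ω (cyl r) (2 * k) (0, 0) (topVertex r)} ≤ 1 / 10000) :
    P.real (reachEvent (strip r) k (0, 0) (exitSet r)) ≤ 1 / 10 := by
  have := hP.1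
  set right := reachEvent (strip r) k (0, 0) (topRight r) ∪
    reachEvent (strip r) k (0, 0) (farRight r)
  have hright : BlueInc right := (blueInc_reachEvent _ _ _ _).union (blueInc_reachEvent _ _ _ _)
  have right_le : P.real right ≤ 1 / 20 :=
    calc P.real right ≤ _ := measureReal_union_le _ _
      _ ≤ 1 / 100 + 1 / 30 :=
          add_le_add (real_topRight_le hP hlow) (real_farRight_le hP hr hblock hlow)
      _ ≤ 1 / 20 := by norm_num
  calc P.real (reachEvent (strip r) k (0, 0) (exitSet r))
      ≤ P.real (right ∪ {ω | ω ∘ reflectCol ∈ right}) :=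
        measureReal_mono (reachEvent_exitSet_subset (by omega) k) (measure_ne_top P _)
    _ ≤ P.real right + P.real {ω | ω ∘ reflectCol ∈ right} := measureReal_union_le _ _
    _ = P.real right + P.real right := by rw [hright.real_comp_iso hP]
    _ ≤ 1 / 10 := by linarith

end ExitProbability

/-! ### Hooks -/

section Hook

variable {P : Measure Config} {ω : Config} {n R m : ℕ} {g : triGraph ≃g triGraph} {s d : ℤ × ℤ}

/-- The symmetry placing a copy of the standard block, turned by `g`, at `s + jRd`. When `g` turns
`i√3·R` into `Rd`, that block ends at `s + (j + 1)Rd`. -/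
def legIso (R : ℕ) (g : triGraph ≃g triGraph) (s d : ℤ × ℤ) (j : ℕ) : triGraph ≃g triGraph :=
  g.trans (translation (s.1 + R * j * d.1, s.2 + R * j * d.2))

theorem legIso_apply (R : ℕ) (g : triGraph ≃g triGraph) (s d : ℤ × ℤ) (j : ℕ) (v : ℤ × ℤ) :
    legIso R g s d j v = ((g v).1 + (s.1 + R * j * d.1), (g v).2 + (s.2 + R * j * d.2)) := rfl

/-- The event that `m` successive blocks in direction `d`, the first one starting at `s`, are all
crossed. -/
def leg (R : ℕ) (g : triGraph ≃g triGraph) (s d : ℤ × ℤ) (m : ℕ) : Set Config :=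
  ⋂ j ∈ Finset.range m, {ω | ω ∘ legIso R g s d j ∈ block R}

theorem blueInc_leg (R : ℕ) (g : triGraph ≃g triGraph) (s d : ℤ × ℤ) (m : ℕ) :
    BlueInc (leg R g s d m) :=
  .biInter fun _ _ => (blueInc_block R).comp_mem _

theorem pow_real_block_le_real_leg (hP : IsBernoulliHalf P) (R : ℕ) (g : triGraph ≃g triGraph)
    (s d : ℤ × ℤ) (m : ℕ) : P.real (block R) ^ m ≤ P.real (leg R g s d m) := by
  have prod_le := harris_biInter hP (fun j => (blueInc_block R).comp_mem (legIso R g s d j))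
    (Finset.range m)
  simp only [(blueInc_block R).real_comp_iso hP, Finset.prod_const, Finset.card_range] at prod_le
  exact prod_le

theorem dependsOn_leg {U : Set (ℤ × ℤ)}
    (hU : ∀ j < m, Set.MapsTo (legIso R g s d j) (hexBall (0, 0) (4 * R)) U) :
    DependsOn (· ∈ leg R g s d m) U := by
  intro ω ω' h
  simp only [leg, Set.mem_iInter, Finset.mem_range]
  exact propext <| forall₂_congr fun j hj =>
    (dependsOn_comp_mem (dependsOn_block R) (hU j hj) h).to_iff

theorem reach_of_leg {T : Set (ℤ × ℤ)} (hg : g (0, 0) = (0, 0))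
    (hgd : g (topVertex R) = (R * d.1, R * d.2)) (hω : ω ∈ leg R g s d m) (hm : 1 ≤ m)
    (hT : ∀ j < m, Set.MapsTo (legIso R g s d j) (cyl R ∩ hexBall (0, 0) (4 * R)) T) :
    Reach ω T 0 s (s.1 + R * m * d.1, s.2 + R * m * d.2) := by
  have block_reach {j : ℕ} (hj : j < m) : Reach ω T 0 (s.1 + R * j * d.1, s.2 + R * j * d.2)
      (s.1 + R * (j + 1 : ℕ) * d.1, s.2 + R * (j + 1 : ℕ) * d.2) := by
    have := Reach.map_iso (legIso R g s d j) (hT j hj)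
      (Set.mem_iInter₂.1 hω j (Finset.mem_range.2 hj))
    rw [legIso_apply, legIso_apply, hg, hgd] at this
    convert this using 2 <;> push_cast <;> ring
  suffices ∀ i, 1 ≤ i → i ≤ m → Reach ω T 0 s (s.1 + R * i * d.1, s.2 + R * i * d.2) from
    this m hm le_rfl
  intro i hi
  induction i, hi using Nat.le_induction with
  | base => exact fun _ => by simpa using block_reach hm
  | succ i _ ih => exact fun hi => (ih (by omega)).trans (block_reach hi)

/-- A blue path which starts to the left of `i√3·n`, at `(-n - 17R, 2n + R)`, passes above that
point and ends at `i√3·(n + 8R)`. -/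
def outerHook (n R : ℕ) : Set Config :=
  leg R rotate.symm (-n - 17 * R, 2 * n + R) (1, 1) 11 ∩
    leg R SimpleGraph.Iso.refl (-n - 6 * R, 2 * n + 12 * R) (-1, 2) 2

/-- A blue path from `(-n - 17R, 2n + R)`, to the left of `i√3·n`, to `(-n + 16R, 2n + R)`, to the
right of it, which passes below that point. -/
def innerHook (n R : ℕ) : Set Config :=
  leg R (rotate.symm.trans rotate.symm) (-n - 17 * R, 2 * n + R) (2, -1) 11 ∩
    leg R rotate.symm (-n + 5 * R, 2 * n - 10 * R) (1, 1) 11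

/-- A blue path around `i√3·n`, joined to `i√3·(n + 8R)`. It consists of `35` blocks of scale
`R`. -/
def hook (n R : ℕ) : Set Config := outerHook n R ∩ innerHook n R

theorem blueInc_outerHook (n R : ℕ) : BlueInc (outerHook n R) :=
  (blueInc_leg _ _ _ _ _).inter (blueInc_leg _ _ _ _ _)

theorem blueInc_innerHook (n R : ℕ) : BlueInc (innerHook n R) :=
  (blueInc_leg _ _ _ _ _).inter (blueInc_leg _ _ _ _ _)

theorem blueInc_hook (n R : ℕ) : BlueInc (hook n R) :=
  (blueInc_outerHook n R).inter (blueInc_innerHook n R)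

theorem pow_real_block_le_real_hook (hP : IsBernoulliHalf P) (n R : ℕ) :
    P.real (block R) ^ 35 ≤ P.real (hook n R) :=
  calc P.real (block R) ^ 35 = (P.real (block R) ^ 11 * P.real (block R) ^ 2) *
        (P.real (block R) ^ 11 * P.real (block R) ^ 11) := by ring
    _ ≤ P.real (outerHook n R) * P.real (innerHook n R) := by
        gcongr
        · refine le_trans ?_ (harris hP (blueInc_leg _ _ _ _ _) (blueInc_leg _ _ _ _ _))
          gcongr <;> exact pow_real_block_le_real_leg hP _ _ _ _ _
        · refine le_trans ?_ (harris hP (blueInc_leg _ _ _ _ _) (blueInc_leg _ _ _ _ _))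
          gcongr <;> exact pow_real_block_le_real_leg hP _ _ _ _ _
    _ ≤ P.real (hook n R) := harris hP (blueInc_outerHook n R) (blueInc_innerHook n R)

theorem mul_add_le_mul_of_lt (R : ℕ) {j : ℕ} (h : j < m) : (R : ℤ) * j + R ≤ R * m := by
  have : R * (j + 1) ≤ R * m := Nat.mul_le_mul_left _ h
  exact_mod_cast this

theorem dependsOn_hook (n R : ℕ) :
    DependsOn (· ∈ hook n R) (boxAt (topVertex n) (24 * R) : Set (ℤ × ℤ)) := by
  refine dependsOn_inter (dependsOn_inter (dependsOn_leg ?_) (dependsOn_leg ?_))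
    (dependsOn_inter (dependsOn_leg ?_) (dependsOn_leg ?_))
  all_goals
    intro j hj v hv
    have block_le := mul_add_le_mul_of_lt R hj
    have block_nonneg : 0 ≤ (R : ℤ) * j := by positivity
    push_cast at block_le
    simp only [mem_hexBall] at hv
    simp only [Finset.mem_coe, mem_boxAt, topVertex, legIso_apply, RelIso.trans_apply,
      rotate_symm_apply, SimpleGraph.Iso.refl, RelIso.refl_apply]
    push_cast
    omega

theorem reach_of_outerHook (hR : 0 < R) (hn : 25 * R ≤ n) (hω : ω ∈ outerHook n R) :
    Reach ω (cyl (n + 8 * R)) 0 (-n - 17 * R, 2 * n + R) (topVertex (n + 8 * R)) := by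
  have upper := reach_of_leg (T := cyl (n + 8 * R)) rfl
    (by ext <;> simp only [topVertex, rotate_symm_apply] <;> ring) hω.1 (by norm_num) (by
      intro j hj v hv
      have block_le := mul_add_le_mul_of_lt R hj
      have block_nonneg : 0 ≤ (R : ℤ) * j := by positivity
      push_cast at block_le
      have hv := hv.2
      simp only [mem_hexBall, mem_cyl, legIso_apply, rotate_symm_apply] at hv ⊢
      push_cast
      omega)
  have final := reach_of_leg (T := cyl (n + 8 * R)) rfl
    (by ext <;> simp only [topVertex, SimpleGraph.Iso.refl, RelIso.refl_apply] <;> ring)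
    hω.2 (by norm_num) (by
      intro j hj v hv
      simp only [Set.mem_inter_iff, mem_hexBall, mem_cyl, legIso_apply, SimpleGraph.Iso.refl,
        RelIso.refl_apply] at hv ⊢
      interval_cases j <;> push_cast <;> omega)
  convert upper.trans (by convert final using 2 <;> push_cast <;> ring) using 2 <;>
    simp only [topVertex] <;> push_cast <;> ring

/-- The sites at height comparable with that of `i√3·n` and outside an upward cone whose apex is
below `i√3·n`. -/
def belowCone (n R : ℕ) : Set (ℤ × ℤ) :=
  {v | (2 * n - 24 * R ≤ v.2 ∧ v.2 < 2 * n + 16 * R) ∧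
    (v.1 + 2 * v.2 ≤ 3 * n - 2 * R ∨ 2 * R ≤ v.1 - v.2 + 3 * n)}

theorem reach_of_innerHook (hR : 0 < R) (hω : ω ∈ innerHook n R) :
    Reach ω (belowCone n R) 0 (-n - 17 * R, 2 * n + R) (-n + 16 * R, 2 * n + R) := by
  have lower := reach_of_leg (T := belowCone n R) rfl
    (by ext <;> simp only [topVertex, RelIso.trans_apply, rotate_symm_apply] <;> ring)
    hω.1 (by norm_num) (by
      intro j hj v hv
      have block_le := mul_add_le_mul_of_lt R hj
      have block_nonneg : 0 ≤ (R : ℤ) * j := by positivity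
      push_cast at block_le
      have hv := hv.2
      simp only [belowCone, Set.mem_ofPred_eq, mem_hexBall, legIso_apply, RelIso.trans_apply,
        rotate_symm_apply] at hv ⊢
      omega)
  have upper := reach_of_leg (T := belowCone n R) rfl
    (by ext <;> simp only [topVertex, rotate_symm_apply] <;> ring) hω.2 (by norm_num) (by
      intro j hj v hv
      have block_le := mul_add_le_mul_of_lt R hj
      have block_nonneg : 0 ≤ (R : ℤ) * j := by positivity
      push_cast at block_le
      have hv := hv.2
      simp only [belowCone, Set.mem_ofPred_eq, mem_hexBall, legIso_apply, rotate_symm_apply] at hv ⊢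
      omega)
  convert lower.trans (by convert upper using 2 <;> push_cast <;> ring) using 2 <;>
    push_cast <;> ring

/-- Prolonged by a vertical ray, which stays in the cone, the path `γ` has to cross `w`. -/
theorem exists_mem_support_of_belowCone {ρ : ℤ} {z : ℤ × ℤ} (hρ : 4 * ρ < R) (hn : 25 * R ≤ n)
    (hz : 2 * n - ρ ≤ z.2) (hz' : |2 * z.1 + z.2| ≤ ρ) {γ : triGraph.Walk (0, 0) z}
    (hγ : ∀ x ∈ γ.support, x ∈ strip n)
    {w : triGraph.Walk (-n - 17 * R, 2 * n + R) (-n + 16 * R, 2 * n + R)}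
    (hw : ∀ x ∈ w.support, x ∈ belowCone n R) : ∃ x, x ∈ w.support ∧ x ∈ γ.support := by
  rw [abs_le] at hz'
  have hzn := hγ z γ.end_mem_support
  rw [mem_strip] at hzn
  obtain ⟨l, hl⟩ := exists_ray (d := (0, 1)) (by simp [triGraph_adj]) z (40 * R)
  have on_row {x : ℤ × ℤ} (hx : x ∈ (γ.append l).support) (hx' : x.2 = 2 * n + R) :
      |2 * x.1 + 2 * n + R| ≤ ρ + 2 * R := by
    rw [abs_le]
    rcases (SimpleGraph.Walk.mem_support_append_iff _ _).1 hx with h | h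
    · have := hγ x h
      rw [mem_strip] at this
      omega
    · obtain ⟨i, -, rfl⟩ := hl x h
      simp only [Prod.smul_mk, Prod.fst_add, Prod.snd_add, nsmul_eq_mul] at hx' ⊢
      omega
  obtain ⟨x, hxw, hx⟩ := exists_mem_support_of_crossing w (γ.append l)
    (fun x hx => by
      have := (hw x hx).1
      simp only [Prod.smul_mk, Prod.snd_add, nsmul_eq_mul, mul_one]
      push_cast
      omega)
    (fun x hx hrow => by have := abs_le.1 (on_row hx hrow); simp only; omega)
    (fun x hx hrow => by have := abs_le.1 (on_row hx hrow); simp only; omega)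
  refine ⟨x, hxw, ((SimpleGraph.Walk.mem_support_append_iff _ _).1 hx).resolve_right fun h => ?_⟩
  obtain ⟨i, -, rfl⟩ := hl x h
  have := (hw _ hxw).2
  simp only [Prod.smul_mk, Prod.fst_add, Prod.snd_add, nsmul_eq_mul] at this
  omega

theorem reach_of_hook {ρ : ℤ} {K : ℕ} {z : ℤ × ℤ} (hρ : 4 * ρ < R) (hn : 25 * R ≤ n)
    (hω : ω ∈ hook n R) (hz : 2 * n - ρ ≤ z.2) (hz' : |2 * z.1 + z.2| ≤ ρ)
    (h : Reach ω (strip n) K (0, 0) z) :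
    Reach ω (cyl (n + 8 * R)) K (0, 0) (topVertex (n + 8 * R)) := by
  have hR : 0 < R := by linarith [abs_nonneg (2 * z.1 + z.2)]
  obtain ⟨γ, hγ, hγK⟩ := h
  obtain ⟨w, hw, hw0⟩ := reach_of_innerHook hR hω.2
  obtain ⟨x, hxw, hxγ⟩ := exists_mem_support_of_belowCone hρ hn hz hz' hγ hw
  have strip_subset : strip n ⊆ cyl (n + 8 * R) := fun y hy => by
    rw [mem_strip] at hy
    rw [mem_cyl]
    push_cast
    omega
  have belowCone_subset : belowCone n R ⊆ cyl (n + 8 * R) := fun y hy => by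
    have := hy.1
    rw [mem_cyl]
    push_cast
    omega
  exact (reach_of_walks_meet (fun y hy => strip_subset (hγ y hy)) hγK
    (fun y hy => belowCone_subset (hw y hy)) hw0 hxγ hxw).trans (reach_of_outerHook hR hn hω.1)

end Hook

/-! ### The contradiction -/

section Approach

variable {P : Measure Config} {ω : Config} {r n k K N : ℕ} {c δ b : ℝ}

theorem exists_reach_exitSet_and_reach_topVertex (hr : 2 ≤ r) (hrn : r ≤ n)
    (h : Reach ω (cyl n) K (0, 0) (topVertex n)) :
    ∃ (z : ℤ × ℤ) (i j : ℕ), z ∈ exitSet r ∧ (z.2 ≤ (r : ℤ) ^ 15 + 2 ∧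
      |2 * z.1 + z.2| ≤ (r : ℤ) ^ 15 + 2) ∧ i + j ≤ K + 1 ∧
      Reach ω (strip r) i (0, 0) z ∧ Reach ω (topStrip n) j z (topVertex n) := by
  have width_ge : 2 * (r : ℤ) ≤ (r : ℤ) ^ 15 := by
    have : (2 : ℤ) ^ 14 ≤ (r : ℤ) ^ 14 := by gcongr; exact_mod_cast hr
    nlinarith
  obtain ⟨a₀, _, i₀, j₀, hadj₀, rfl, hij₀, from_top, at_origin⟩ :=
    h.symm.first_entrance (· = (0, 0)) (by simp only [topVertex, Prod.ext_iff]; omega) rfl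
  have a₀_near := hadj₀
  simp only [triGraph_adj] at a₀_near
  obtain ⟨a, z, i, j, hadj, hz, hij, before, after⟩ := from_top.symm.first_entrance (· ∈ exitSet r)
    (by simp only [exitSet, Set.mem_ofPred_eq, le_abs]; omega)
    (by simp only [exitSet, Set.mem_ofPred_eq, topVertex]; omega)
  have inner {y : ℤ × ℤ} (hy : y ∈ {y ∈ {y ∈ cyl n | ¬ y = (0, 0)} | y ∉ exitSet r}) :
      (0 < y.2 ∧ y.2 < 2 * r - 1) ∧ |2 * y.1 + y.2| < (r : ℤ) ^ 15 := by
    simp only [exitSet, Set.mem_ofPred_eq, mem_cyl, Prod.ext_iff, not_or, not_le] at hy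
    omega
  obtain ⟨ha, ha_width⟩ := inner before.right_mem
  rw [abs_lt] at ha_width
  have hz_mem := after.symm.right_mem
  have z_near := hadj
  simp only [triGraph_adj, Set.mem_ofPred_eq, mem_cyl, Prod.ext_iff] at z_near hz_mem
  have z_mem_strip : z ∈ strip r := by
    rw [mem_strip]
    omega
  have before_strip : Reach ω (strip r) i a₀ a := before.mono_set fun y hy => by
    have := inner hy
    rw [mem_strip]
    omega
  have to_exit : Reach ω (strip r) (siteTime ω z + (siteTime ω (0, 0) + i)) (0, 0) z :=
    (before_strip.cons hadj₀.symm (Set.mem_insert _ _)).concat hadj z_mem_strip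
  refine ⟨z, _, j, hz, ⟨by omega, abs_le.2 ⟨by omega, by omega⟩⟩, ?_, to_exit,
    after.mono_set fun y hy => ?_⟩
  · have := at_origin.siteTime_left_le
    have := siteTime_le_one ω z
    omega
  · simp only [Set.mem_ofPred_eq, mem_cyl, mem_topStrip, Prod.ext_iff] at hy ⊢
    omega

/-- The sites from which the hook of scale `r ^ 16` around `i√3·n` takes over. -/
def approachSet (r n : ℕ) : Set (ℤ × ℤ) :=
  {z | 2 * n - ((r : ℤ) ^ 15 + 2) ≤ z.2 ∧ |2 * z.1 + z.2| ≤ (r : ℤ) ^ 15 + 2}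

/-- A path to `i√3·n` which pays `k` near its end has only `K - k` left to approach that end. -/
theorem mem_reachEvent_approachSet (hr : 2 ≤ r) (hrn : r ≤ n)
    (h : Reach ω (cyl n) K (0, 0) (topVertex n))
    (hexit : ω ∘ reflectRow n ∉ reachEvent (strip r) k (0, 0) (exitSet r)) :
    ω ∈ reachEvent (strip n) (K - k) (0, 0) (approachSet r n) := by
  have reflect_top : reflectRow n (topVertex n) = (0, 0) := by
    ext <;> simp only [reflectRow_apply, topVertex] <;> ring
  have reflected : Reach (ω ∘ reflectRow n) (cyl n) K (0, 0) (topVertex n) := by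
    have := h.symm.comp_iso (R' := cyl n) (reflectRow n) fun y hy => by
      change reflectRow n y ∈ _
      simp only [mem_cyl, reflectRow_apply] at hy ⊢
      omega
    change Reach _ _ _ (reflectRow n (topVertex n)) (reflectRow n (0, 0)) at this
    rwa [reflect_top, reflectRow_origin] at this
  obtain ⟨z, i, j, hz, ⟨hz_height, hz_width⟩, hij, to_exit, from_exit⟩ :=
    exists_reach_exitSet_and_reach_topVertex hr hrn reflected
  have k_lt_i : k < i := by
    by_contra! hik
    exact hexit ⟨z, hz, to_exit.mono_cost hik⟩
  have approach := from_exit.symm.map_iso (R' := strip n) (reflectRow n) fun y hy => by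
    simp only [mem_topStrip, mem_strip, reflectRow_apply] at hy ⊢
    omega
  rw [reflect_top] at approach
  refine ⟨reflectRow n z, ?_, approach.mono_cost (by omega)⟩
  simp only [approachSet, Set.mem_ofPred_eq, reflectRow_apply]
  rw [abs_le] at hz_width ⊢
  omega

theorem reach_of_mem_logWindow (hω : ω ∈ logWindow c δ N) (hn : 1 ≤ n) (hN : N ≤ n) :
    Reach ω (cyl n) ⌊(c + δ) * Real.log n⌋₊ (0, 0) (topVertex n) := by
  have := (abs_lt.1 (hω n hN)).2
  exact (tCyl_le_iff hn).1 (Nat.le_floor (by linarith))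

theorem lt_of_mem_logWindow (hω : ω ∈ logWindow c δ N) (hn : 1 ≤ n) (hN : N ≤ n)
    (h : Reach ω (cyl n) k (0, 0) (topVertex n)) : (c - δ) * Real.log n < k := by
  have lower := (abs_lt.1 (hω n hN)).1
  have upper : (tCyl ω n : ℝ) ≤ k := by exact_mod_cast (tCyl_le_iff hn).2 h
  linarith

theorem real_low_cost_le (hP : IsBernoulliHalf P) (hc : 0 < c) (hδ : δ ≤ c / 4)
    (hE : 1 - b ≤ P.real (logWindow c δ N)) (hn : 1 ≤ n) (hN : N ≤ n) :
    P.real {ω | Reach ω (cyl n) (2 * ⌊c / 8 * Real.log n⌋₊) (0, 0) (topVertex n)} ≤ b := by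
  refine real_le_of_disjoint hP (blueInc_reach _ _ _ _).measurableSet hE
    (Set.disjoint_left.2 fun ω hω h => ?_)
  have cost_gt := lt_of_mem_logWindow hω hn hN h
  have log_nonneg := Real.log_natCast_nonneg n
  have floor_le : (⌊c / 8 * Real.log n⌋₊ : ℝ) ≤ c / 8 * Real.log n := Nat.floor_le (by positivity)
  push_cast at cost_gt
  nlinarith

theorem three_quarters_le_real_reachEvent_approachSet (hP : IsBernoulliHalf P) (hr : 40 ≤ r)
    (hrn : r ≤ n) (hblock : 1 ≤ (r : ℝ) ^ 13 * P.real (block r))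
    (hlow : P.real {ω | Reach ω (cyl r) (2 * k) (0, 0) (topVertex r)} ≤ 1 / 10000)
    (hE : 1 - 1 / 10000 ≤ P.real {ω | Reach ω (cyl n) K (0, 0) (topVertex n)}) :
    3 / 4 ≤ P.real (reachEvent (strip n) (K - k) (0, 0) (approachSet r n)) := by
  have := hP.1
  have hexit := blueInc_reachEvent (strip r) k (0, 0) (exitSet r)
  have exit_le := real_reachEvent_exitSet_le hP hr hblock hlow
  set exit := reachEvent (strip r) k (0, 0) (exitSet r)
  have covered : {ω | Reach ω (cyl n) K (0, 0) (topVertex n)} ⊆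
      reachEvent (strip n) (K - k) (0, 0) (approachSet r n) ∪ {ω | ω ∘ reflectRow n ∈ exit} :=
    fun ω hω => or_iff_not_imp_right.2 (mem_reachEvent_approachSet (by omega) hrn hω)
  have := (measureReal_mono covered (measure_ne_top P _)).trans (measureReal_union_le _ _)
  rw [hexit.real_comp_iso hP] at this
  linarith

end Approach

/-- The successive values of `n` at which a hook of scale `R` is tried. They are `50 * R` apart, so
that the supports of the hooks are disjoint. -/
def hookLevel (R i : ℕ) : ℕ := 50 * (R * (i + 1))

section Contradiction

variable {P : Measure Config} {ω : Config} {r n N : ℕ} {c δ : ℝ}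

theorem pairwise_disjoint_boxAt_hookLevel {R : ℕ} (hR : 0 < R) :
    Pairwise (Function.onFun Disjoint fun i => boxAt (topVertex (hookLevel R i)) (24 * R)) := by
  rw [pairwise_disjoint_on]
  intro i j hij
  have gap : R * (i + 1) + R ≤ R * (j + 1) := by
    rw [← Nat.mul_succ]
    gcongr
    omega
  refine disjoint_boxAt (.inr ?_)
  simp only [topVertex, hookLevel]
  omega

theorem le_hookLevel (R i : ℕ) : 25 * R ≤ hookLevel R i := by
  rw [hookLevel]
  linarith [Nat.le_mul_of_pos_right R i.succ_pos]

theorem log_hookLevel_le {i : ℕ} (hr : 50 ≤ r) (hi : i < (r ^ 16) ^ 455) :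
    Real.log (hookLevel (r ^ 16) i) ≤ 7297 * Real.log r := by
  have level_le : hookLevel (r ^ 16) i ≤ r ^ 7297 :=
    calc hookLevel (r ^ 16) i ≤ 50 * (r ^ 16 * (r ^ 16) ^ 455) := by
          rw [hookLevel]
          gcongr
          exact hi
      _ = 50 * r ^ 7296 := by ring
      _ ≤ r * r ^ 7296 := by gcongr
      _ = r ^ 7297 := by ring
  have level_pos : 0 < hookLevel (r ^ 16) i := by
    have : 0 < r ^ 16 := by positivity
    linarith [le_hookLevel (r ^ 16) i]
  calc Real.log (hookLevel (r ^ 16) i) ≤ Real.log ((r : ℝ) ^ 7297) :=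
        Real.log_le_log (by exact_mod_cast level_pos) (by exact_mod_cast level_le)
    _ = 7297 * Real.log r := by
        rw [Real.log_pow]
        norm_cast

theorem eighth_le_real_biUnion_inter_hook (hP : IsBernoulliHalf P) {R : ℕ} (hR : 0 < R)
    (hblock : 1 ≤ (R : ℝ) ^ 13 * P.real (block R)) {A : ℕ → Set Config}
    (hA : ∀ i, BlueInc (A i)) (hA_ge : ∀ i < R ^ 455, 3 / 4 ≤ P.real (A i)) :
    1 / 8 ≤ P.real (⋃ i ∈ Finset.range (R ^ 455), A i ∩ hook (hookLevel R i) R) := by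
  have sum_ge : 1 ≤ ∑ i ∈ Finset.range (R ^ 455), P.real (hook (hookLevel R i) R) :=
    calc (1 : ℝ) ≤ ((R : ℝ) ^ 13 * P.real (block R)) ^ 35 := one_le_pow₀ hblock
      _ = ∑ i ∈ Finset.range (R ^ 455), P.real (block R) ^ 35 := by
          rw [Finset.sum_const, Finset.card_range, nsmul_eq_mul, mul_pow, ← pow_mul, Nat.cast_pow]
      _ ≤ _ := Finset.sum_le_sum fun i _ => pow_real_block_le_real_hook hP _ R
  refine le_trans (le_min le_rfl (by linarith)) (min_le_real_biUnion_inter hP hA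
    (fun i => blueInc_hook _ R) (fun i => dependsOn_hook _ R)
    (pairwise_disjoint_boxAt_hookLevel hR) hA_ge)

/-- The hook saves the cost `c / 8 * log r` of reaching `i√3·n`, which exceeds the fluctuation
`2 * δ * log n` allowed by the window. -/
theorem notMem_hook_of_mem_logWindow (hc : 0 < c) (hδ : 10 ^ 6 * δ = c) (hr : 1000 ≤ r)
    (hcr : 10 ≤ c * Real.log r) (hN : N ≤ n) (hn : 25 * r ^ 16 ≤ n)
    (hlog : Real.log n ≤ 7297 * Real.log r) (hω : ω ∈ logWindow c δ N)
    (happroach : ω ∈ reachEvent (strip n) (⌊(c + δ) * Real.log n⌋₊ - ⌊c / 8 * Real.log r⌋₊) (0, 0)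
      (approachSet r n)) : ω ∉ hook n (r ^ 16) := by
  intro hhook
  have scale_gap : 4 * ((r : ℤ) ^ 15 + 2) < (r ^ 16 : ℕ) := by
    have : (1000 : ℤ) ≤ r := by exact_mod_cast hr
    have : (1 : ℤ) ≤ (r : ℤ) ^ 15 := one_le_pow₀ (by omega)
    push_cast
    nlinarith
  have n_pos : 0 < n := lt_of_lt_of_le (by positivity) hn
  obtain ⟨z, ⟨hz, hz'⟩, hreach⟩ := happroach
  have saved := lt_of_mem_logWindow hω (by omega) (by omega)
    (reach_of_hook scale_gap hn hhook (by linarith) hz' hreach)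
  have log_le : Real.log n ≤ Real.log (n + 8 * r ^ 16 : ℕ) :=
    Real.log_le_log (by exact_mod_cast n_pos) (by exact_mod_cast Nat.le_add_right _ _)
  have log_nonneg := Real.log_natCast_nonneg n
  have total_le : (⌊(c + δ) * Real.log n⌋₊ : ℝ) ≤ (c + δ) * Real.log n :=
    Nat.floor_le (mul_nonneg (by linarith) log_nonneg)
  have saving_gt := Nat.lt_floor_add_one (c / 8 * Real.log r)
  have lower_le : (c - δ) * Real.log n ≤ (c - δ) * Real.log (n + 8 * r ^ 16 : ℕ) :=
    mul_le_mul_of_nonneg_left log_le (by linarith)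
  have fluctuation_le : 2 * δ * Real.log n ≤ c / 50 * Real.log r :=
    calc 2 * δ * Real.log n ≤ 2 * δ * (10000 * Real.log r) :=
          mul_le_mul_of_nonneg_left (by linarith [Real.log_natCast_nonneg r]) (by linarith)
      _ = c / 50 * Real.log r := by rw [← hδ]; ring
  rcases le_total ⌊c / 8 * Real.log r⌋₊ ⌊(c + δ) * Real.log n⌋₊ with hle | hle
  · rw [Nat.cast_sub hle] at saved
    linarith
  · rw [Nat.sub_eq_zero_of_le hle, Nat.cast_zero] at saved
    nlinarith

theorem not_logLaw (hP : IsBernoulliHalf P) (hc : 0 < c) : ¬ LogLaw P c := by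
  intro hlaw
  obtain ⟨δ, hδ⟩ : ∃ δ, 10 ^ 6 * δ = c := ⟨c / 10 ^ 6, by ring⟩
  have block_ge := eventually_one_le_real_block hP hc hlaw
  have log_tendsto : Tendsto (fun r : ℕ => Real.log r) atTop atTop :=
    Real.tendsto_log_atTop.comp tendsto_natCast_atTop_atTop
  have c_log_ge : ∀ᶠ r : ℕ in atTop, 10 ≤ c * Real.log r :=
    (log_tendsto.const_mul_atTop hc).eventually_ge_atTop 10
  obtain ⟨r, window_ge, block_r, block_R, hr, hcr⟩ :=
    ((hlaw.eventually_le_real (by linarith : 0 < δ) (by norm_num : (0 : ℝ) < 1 / 10000)).and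
      (block_ge.and (((tendsto_pow_atTop (by norm_num : 16 ≠ 0)).eventually block_ge).and
        ((eventually_ge_atTop 1000).and c_log_ge)))).exists
  obtain ⟨R, hR⟩ : ∃ R, R = r ^ 16 := ⟨_, rfl⟩
  rw [← hR] at block_R
  set k := ⌊c / 8 * Real.log r⌋₊
  set A : ℕ → Set Config := fun i => reachEvent (strip (hookLevel R i))
    (⌊(c + δ) * Real.log (hookLevel R i)⌋₊ - k) (0, 0) (approachSet r (hookLevel R i))
  have A_blueInc (i : ℕ) : BlueInc (A i) := blueInc_reachEvent _ _ _ _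
  have r_le (i : ℕ) : r ≤ hookLevel R i := by
    have := le_hookLevel R i
    have : r ≤ R := hR ▸ Nat.le_self_pow (by norm_num) r
    omega
  have low_cost_le := real_low_cost_le hP hc (by linarith) window_ge (by omega) le_rfl
  have A_ge (i : ℕ) : 3 / 4 ≤ P.real (A i) := by
    have := hP.1
    refine three_quarters_le_real_reachEvent_approachSet hP (by omega) (r_le i) block_r low_cost_le
      (window_ge.trans (measureReal_mono (fun ω hω => ?_) (measure_ne_top P _)))
    exact reach_of_mem_logWindow hω (by linarith [r_le i]) (r_le i)
  have union_ge := eighth_le_real_biUnion_inter_hook hP (by rw [hR]; positivity) block_R A_blueInc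
    fun i _ => A_ge i
  have union_measurable : MeasurableSet
      (⋃ i ∈ Finset.range (R ^ 455), A i ∩ hook (hookLevel R i) R) :=
    Finset.measurableSet_biUnion _ fun i _ => ((A_blueInc i).inter (blueInc_hook _ R)).measurableSet
  have union_le := real_le_of_disjoint hP union_measurable window_ge <| by
    refine Set.disjoint_left.2 fun ω hω hω' => ?_
    obtain ⟨i, hi, happroach, hhook⟩ := Set.mem_iUnion₂.1 hω'
    subst hR
    exact notMem_hook_of_mem_logWindow hc hδ hr hcr (r_le i) (le_hookLevel _ i)
      (log_hookLevel_le (by omega) (Finset.mem_range.1 hi)) hω happroach hhook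
  linarith

end Contradiction

theorem tCyl_not_as_general (P : Measure Config) (hP : IsBernoulliHalf P) {c : ℝ} (hc : 0 < c) :
    P {ω : Config | Tendsto (fun n : ℕ => (tCyl ω n : ℝ) / Real.log n) atTop (𝓝 c)} < 1 := by
  have := hP.1
  by_contra h
  exact not_logLaw hP hc (logLaw_of_tendsto hP (le_antisymm prob_le_one (not_lt.1 h)))

/-- The convergence `t_{0,n} / log n → √3/π` does NOT hold almost surely. -/
theorem tCyl_not_as (P : Measure Config) (hP : IsBernoulliHalf P) :
    P {ω : Config | Tendsto (fun n : ℕ => (tCyl ω n : ℝ) / Real.log n) atTop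
        (𝓝 (Real.sqrt 3 / Real.pi))} < 1 :=
  tCyl_not_as_general P hP (div_pos (by positivity) Real.pi_pos)
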